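/- arXiv:1910.09825 — 3 statements merged into one kernel-verified Lean document; each statement's English description precedes it below -/
import Mathlib

section
/- Let n be a positive integer such that the p-adic valuation ν_p(n) is different from 1 for each p ∈ {3, 5, 7, 11}, and such that ν_2(n) is even and different from 2 and 4. Then there exists a maximally nonassociative quasigroup of order n. -/
/-!
Let `f` be a map of a finite abelian group with `f 0 = 0` such that `f` and `x ↦ x - f x` are
injective. Then `x + f (y - x)` is an idempotent quasigroup operation, so the triples `(x, x, x)`
associate, and by translation there are no others as soon as an equation in two unknowns has only
the zero solution. On a finite field let `f` multiply each coset of the `e`-th powers by a constant,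
with `e = 2` in odd characteristic and `e = 3` in characteristic two: the equation becomes linear
on each choice of cosets, and excluding its solutions amounts to prescribing characters of
polynomials in the constants.

Orders multiply under direct products, so prime powers suffice. For large primes, Stepanov's method
bounds the relevant quadratic character sums and yields constants in a one-parameter family. For
primes below this bound, small integer constants work, chosen by the Legendre symbols of small
primes. The finitely many remaining fields are settled by explicit constants.
-/

namespace MaxNonassoc

/-- Unique solvability of `a * x = b` and `y * a = b` for the operation `m`. -/
def IsQuasigroup {Q : Type*} (m : Q → Q → Q) : Prop :=
  ∀ a b : Q, (∃! x, m a x = b) ∧ (∃! y, m y a = b)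

/-- The triples on which the operation `m` associates. -/
abbrev AssocTriple {Q : Type*} (m : Q → Q → Q) : Type _ :=
  {t : Q × Q × Q // m (m t.1 t.2.1) t.2.2 = m t.1 (m t.2.1 t.2.2)}

/-- The cardinality of `Q` is the least possible number of associative triples of a quasigroup
on `Q`, attained by the maximally nonassociative ones. -/
def HasMaxNonassoc (n : ℕ) : Prop :=
  ∃ (Q : Type) (m : Q → Q → Q), Nat.card Q = n ∧ IsQuasigroup m ∧ Nat.card (AssocTriple m) = n

theorem IsQuasigroup.prodMap {Q R : Type*} {m : Q → Q → Q} {s : R → R → R}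
    (hm : IsQuasigroup m) (hs : IsQuasigroup s) :
    IsQuasigroup fun x y : Q × R => (m x.1 y.1, s x.2 y.2) := by
  rintro ⟨a, a'⟩ ⟨b, b'⟩
  obtain ⟨⟨x, hx, x_unique⟩, y, hy, y_unique⟩ := hm a b
  obtain ⟨⟨x', hx', x'_unique⟩, y', hy', y'_unique⟩ := hs a' b'
  refine ⟨⟨(x, x'), Prod.ext hx hx', fun w hw => ?_⟩, ⟨(y, y'), Prod.ext hy hy', fun w hw => ?_⟩⟩
  · exact Prod.ext (x_unique _ (congrArg Prod.fst hw)) (x'_unique _ (congrArg Prod.snd hw))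
  · exact Prod.ext (y_unique _ (congrArg Prod.fst hw)) (y'_unique _ (congrArg Prod.snd hw))

theorem card_assocTriple_prodMap {Q R : Type*} (m : Q → Q → Q) (s : R → R → R) :
    Nat.card (AssocTriple fun x y : Q × R => (m x.1 y.1, s x.2 y.2)) =
      Nat.card (AssocTriple m) * Nat.card (AssocTriple s) := by
  rw [← Nat.card_prod]
  exact Nat.card_congr
    { toFun t := (⟨(t.1.1.1, t.1.2.1.1, t.1.2.2.1), congrArg Prod.fst t.2⟩,
        ⟨(t.1.1.2, t.1.2.1.2, t.1.2.2.2), congrArg Prod.snd t.2⟩)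
      invFun t := ⟨((t.1.1.1, t.2.1.1), (t.1.1.2.1, t.2.1.2.1), (t.1.1.2.2, t.2.1.2.2)),
        Prod.ext t.1.2 t.2.2⟩ }

theorem hasMaxNonassoc_one : HasMaxNonassoc 1 :=
  ⟨Unit, fun _ _ => (), by simp, fun _ _ => ⟨⟨(), by simp, by simp⟩, (), by simp, by simp⟩,
    by simp [AssocTriple]⟩

theorem HasMaxNonassoc.mul {k l : ℕ} (hk : HasMaxNonassoc k) (hl : HasMaxNonassoc l) :
    HasMaxNonassoc (k * l) := by
  obtain ⟨Q, m, hQ, hm, hmk⟩ := hk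
  obtain ⟨R, s, hR, hs, hsl⟩ := hl
  exact ⟨Q × R, fun x y => (m x.1 y.1, s x.2 y.2), by rw [Nat.card_prod, hQ, hR],
    hm.prodMap hs, by rw [card_assocTriple_prodMap, hmk, hsl]⟩

/-- The orders of maximally nonassociative quasigroups, closed under products because
direct products of maximally nonassociative quasigroups are maximally nonassociative. -/
def maxNonassocOrders : Submonoid ℕ where
  carrier := {n | HasMaxNonassoc n}
  one_mem' := hasMaxNonassoc_one
  mul_mem' := HasMaxNonassoc.mul

section Orthomorphism

variable {G : Type*} [AddCommGroup G] {f : G → G}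

theorem isQuasigroup_add_apply_sub [Finite G] (hf : f.Injective)
    (hsub : (fun x => x - f x).Injective) : IsQuasigroup fun x y => x + f (y - x) := by
  have hf := hf.bijective_of_finite
  have hsub := hsub.bijective_of_finite
  refine fun a b => ⟨?_, ?_⟩
  · exact (((Equiv.addLeft a).bijective.comp hf).comp (Equiv.subRight a).bijective).existsUnique b
  · have hbij := ((Equiv.subLeft a).bijective.comp hsub).comp (Equiv.subLeft a).bijective
    refine (existsUnique_congr fun y => ?_).1 (hbij.existsUnique b)
    simp [sub_sub_eq_add_sub, add_comm, add_sub_assoc]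

theorem assoc_add_apply_sub_iff (h0 : f 0 = 0)
    (h : ∀ u z, f (f z + u) = f u + f (z + u - f u) → u = 0 ∧ z = 0) (x y z : G) :
    x + f (y - x) + f (z - (x + f (y - x))) = x + f (y + f (z - y) - x) ↔ x = y ∧ y = z := by
  constructor
  · intro e
    have key := h (y - x) (z - y) <| by
      rw [show f (z - y) + (y - x) = y + f (z - y) - x by abel,
        show z - y + (y - x) - f (y - x) = z - (x + f (y - x)) by abel,
        ← add_right_inj x, ← e, add_assoc]
    exact ⟨(sub_eq_zero.1 key.1).symm, (sub_eq_zero.1 key.2).symm⟩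
  · rintro ⟨rfl, rfl⟩
    simp [h0]

theorem card_assocTriple_add_apply_sub (h0 : f 0 = 0)
    (h : ∀ u z, f (f z + u) = f u + f (z + u - f u) → u = 0 ∧ z = 0) :
    Nat.card (AssocTriple fun x y => x + f (y - x)) = Nat.card G := by
  have assoc_iff := assoc_add_apply_sub_iff h0 h
  refine Nat.card_congr
    { toFun t := t.1.1
      invFun x := ⟨(x, x, x), (assoc_iff x x x).2 ⟨rfl, rfl⟩⟩
      left_inv := ?_ }
  rintro ⟨⟨x, y, z⟩, hxyz⟩
  obtain ⟨rfl, rfl⟩ := (assoc_iff x y z).1 hxyz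
  rfl

theorem hasMaxNonassoc_of_orthomorphism {G : Type} [AddCommGroup G] [Finite G] (f : G → G)
    (h0 : f 0 = 0) (hf : f.Injective) (hsub : (fun x => x - f x).Injective)
    (h : ∀ u z, f (f z + u) = f u + f (z + u - f u) → u = 0 ∧ z = 0) :
    HasMaxNonassoc (Nat.card G) :=
  ⟨G, fun x y => x + f (y - x), rfl, isQuasigroup_add_apply_sub hf hsub,
    card_assocTriple_add_apply_sub h0 h⟩

end Orthomorphism

section Cyclotomic

/-! With `f x = (c k / e) * x`, where `k` is the class of `x`, let `i`, `j`, `r`, `s` be the classes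
of `u`, `z`, `f z + u`, `z + u - f u`. The equation `f (f z + u) = f u + f (z + u - f u)` then reads
`D * z = N * u`, and it implies `e * D * (f z + u) = U * u` and `e * D * (z + u - f u) = V * u`. -/

variable {ι A : Type*} [CommRing A]

/-- The coefficient `D` of `z` in the linear form of the associativity equation. -/
def formD (e : A) (c : ι → A) (j r s : ι) : A := c r * c j - c s * e

/-- The coefficient `N` of `u` in the linear form of the associativity equation. -/
def formN (e : A) (c : ι → A) (i r s : ι) : A := (c i + c s - c r) * e - c s * c i

/-- The ratio of `f z + u` to `u`, multiplied by `e * D`. -/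
def formU (e : A) (c : ι → A) (i j r s : ι) : A := c j * formN e c i r s + e * formD e c j r s

/-- The ratio of `z + u - f u` to `u`, multiplied by `e * D`. -/
def formV (e : A) (c : ι → A) (i j r s : ι) : A :=
  e * formN e c i r s + (e - c i) * formD e c j r s

theorem intCast_formD (e : ℤ) (c : ι → ℤ) (j r s : ι) :
    formD (e : A) (fun i => (c i : A)) j r s = (formD e c j r s : ℤ) := by
  simp [formD]

theorem intCast_formN (e : ℤ) (c : ι → ℤ) (i r s : ι) :
    formN (e : A) (fun i => (c i : A)) i r s = (formN e c i r s : ℤ) := by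
  simp [formN]

theorem intCast_formU (e : ℤ) (c : ι → ℤ) (i j r s : ι) :
    formU (e : A) (fun i => (c i : A)) i j r s = (formU e c i j r s : ℤ) := by
  simp [formU, intCast_formN, intCast_formD]

theorem intCast_formV (e : ℤ) (c : ι → ℤ) (i j r s : ι) :
    formV (e : A) (fun i => (c i : A)) i j r s = (formV e c i j r s : ℤ) := by
  simp [formV, intCast_formN, intCast_formD]

variable {F M : Type*} [Field F] [CommMonoid M]

/-- Multiplication by `c i / e` on each class `{x | χ x = v i}`, a cyclotomic orthomorphism. -/
noncomputable def cyclotomicMap (χ : F →* M) (v : ι → M) (e : F) (c : ι → F)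
    (hv : ∀ x, x ≠ 0 → ∃ i, χ x = v i) (x : F) : F :=
  open Classical in if hx : x = 0 then 0 else c (hv x hx).choose / e * x

variable {χ : F →* M} {v : ι → M} {e : F} {c : ι → F} (hv : ∀ x, x ≠ 0 → ∃ i, χ x = v i)

theorem cyclotomicMap_zero : cyclotomicMap χ v e c hv 0 = 0 := dif_pos rfl

theorem exists_mul_cyclotomicMap_eq (he : e ≠ 0) {x : F} (hx : x ≠ 0) :
    ∃ i, χ x = v i ∧ e * cyclotomicMap χ v e c hv x = c i * x := by
  refine ⟨_, (hv x hx).choose_spec, ?_⟩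
  rw [cyclotomicMap, dif_neg hx, ← mul_assoc, mul_div_cancel₀ _ he]

theorem injective_of_mul_eq_class {g : F → F} {d : ι → F} (h0 : g 0 = 0)
    (hg : ∀ x, x ≠ 0 → ∃ i, χ x = v i ∧ e * g x = d i * x) (hd : ∀ i, d i ≠ 0)
    (hinj : Function.Injective fun i => χ (d i) * v i) : g.Injective := by
  have ne_zero {x : F} (hx : x ≠ 0) : g x ≠ 0 := by
    obtain ⟨i, -, hi⟩ := hg x hx
    rintro h
    rw [h, mul_zero, eq_comm, mul_eq_zero] at hi
    exact hi.elim (hd i) hx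
  intro x y hxy
  rcases eq_or_ne x 0 with rfl | hx
  · by_contra hy
    exact ne_zero (Ne.symm hy) (hxy ▸ h0)
  rcases eq_or_ne y 0 with rfl | hy
  · exact absurd (hxy.trans h0) (ne_zero hx)
  obtain ⟨i, hxi, hgi⟩ := hg x hx
  obtain ⟨j, hyj, hgj⟩ := hg y hy
  have hmul : d i * x = d j * y := by rw [← hgi, ← hgj, hxy]
  obtain rfl : i = j := hinj <| by
    simpa only [map_mul, hxi, hyj] using congrArg χ hmul
  exact mul_left_cancel₀ (hd i) hmul

variable {f : F → F}

theorem exists_class_or_eq_zero [Nonempty ι] (h0 : f 0 = 0)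
    (hf : ∀ x, x ≠ 0 → ∃ i, χ x = v i ∧ e * f x = c i * x) (w : F) :
    ∃ i, (w = 0 ∨ χ w = v i) ∧ e * f w = c i * w := by
  rcases eq_or_ne w 0 with rfl | hw
  · exact ⟨Classical.arbitrary ι, Or.inl rfl, by rw [h0, mul_zero, mul_zero]⟩
  · obtain ⟨i, hi, hfi⟩ := hf w hw
    exact ⟨i, Or.inr hi, hfi⟩

theorem exists_class_relations (h0 : f 0 = 0)
    (hf : ∀ x, x ≠ 0 → ∃ i, χ x = v i ∧ e * f x = c i * x) {u z : F} (hu : u ≠ 0) (hz : z ≠ 0)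
    (h : f (f z + u) = f u + f (z + u - f u)) :
    ∃ i j r s, χ (formN e c i r s) * v i = v j * χ (formD e c j r s) ∧
      (formU e c i j r s = 0 ∨ χ (formU e c i j r s) * v i = v r * χ (e * formD e c j r s)) ∧
      (formV e c i j r s = 0 ∨ χ (formV e c i j r s) * v i = v s * χ (e * formD e c j r s)) := by
  obtain ⟨i, hui, hfu⟩ := hf u hu
  obtain ⟨j, hzj, hfz⟩ := hf z hz
  have : Nonempty ι := ⟨i⟩
  obtain ⟨r, hr, hfr⟩ := exists_class_or_eq_zero h0 hf (f z + u)
  obtain ⟨s, hs, hfs⟩ := exists_class_or_eq_zero h0 hf (z + u - f u)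
  have hN : formN e c i r s * u = z * formD e c j r s := by
    unfold formN formD
    linear_combination (-e ^ 2) * h + e * hfr - e * hfs + (c s - e) * hfu + c r * hfz
  have hU : formU e c i j r s * u = (f z + u) * (e * formD e c j r s) := by
    unfold formU
    linear_combination c j * hN - formD e c j r s * hfz
  have hV : formV e c i j r s * u = (z + u - f u) * (e * formD e c j r s) := by
    unfold formV
    linear_combination e * hN + formD e c j r s * hfu
  refine ⟨i, j, r, s, ?_, hr.imp (fun hw => ?_) (fun hw => ?_), hs.imp (fun hw => ?_) fun hw => ?_⟩
  · rw [← hui, ← hzj, ← map_mul, ← map_mul, hN]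
  · exact (mul_eq_zero_iff_right hu).1 (by rw [hU, hw, zero_mul])
  · rw [← hui, ← hw, ← map_mul, ← map_mul, hU]
  · exact (mul_eq_zero_iff_right hu).1 (by rw [hV, hw, zero_mul])
  · rw [← hui, ← hw, ← map_mul, ← map_mul, hV]

theorem hasMaxNonassoc_of_monoidHom {F : Type} [Field F] [Finite F] {χ : F →* M} {e : F}
    {c : ι → F} (hv : ∀ x, x ≠ 0 → ∃ i, χ x = v i) (he : e ≠ 0) (hc : ∀ i, c i ≠ 0)
    (hec : ∀ i, e - c i ≠ 0) (hinj : Function.Injective fun i => χ (c i) * v i)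
    (hinj_sub : Function.Injective fun i => χ (e - c i) * v i)
    (h : ∀ i j r s, χ (formN e c i r s) * v i = v j * χ (formD e c j r s) →
      (formU e c i j r s = 0 ∨ χ (formU e c i j r s) * v i = v r * χ (e * formD e c j r s)) →
      ¬(formV e c i j r s = 0 ∨ χ (formV e c i j r s) * v i = v s * χ (e * formD e c j r s))) :
    HasMaxNonassoc (Nat.card F) := by
  set f := cyclotomicMap χ v e c hv
  have f_zero : f 0 = 0 := cyclotomicMap_zero hv
  have hf (x : F) (hx : x ≠ 0) : ∃ i, χ x = v i ∧ e * f x = c i * x :=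
    exists_mul_cyclotomicMap_eq hv he hx
  have f_inj : f.Injective := injective_of_mul_eq_class f_zero hf hc hinj
  have sub_inj : (fun x => x - f x).Injective := by
    refine injective_of_mul_eq_class (e := e) (by simp [f_zero]) (fun x hx => ?_) hec hinj_sub
    obtain ⟨i, hi, hfi⟩ := hf x hx
    exact ⟨i, hi, by rw [mul_sub, hfi, sub_mul]⟩
  have eq_zero_of_fixed {x : F} (hx : x - f x = 0) : x = 0 := sub_inj (by simp [hx, f_zero])
  refine hasMaxNonassoc_of_orthomorphism f f_zero f_inj sub_inj fun u z huz => ?_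
  rcases eq_or_ne u 0 with rfl | hu
  · refine ⟨rfl, eq_zero_of_fixed (sub_eq_zero.2 (f_inj ?_))⟩
    simpa [f_zero] using huz.symm
  rcases eq_or_ne z 0 with rfl | hz
  · refine ⟨eq_zero_of_fixed (f_inj ?_), rfl⟩
    simpa [f_zero] using huz.symm
  obtain ⟨i, j, r, s, hN, hU, hV⟩ := exists_class_relations f_zero hf hu hz huz
  exact absurd hV (h i j r s hN hU)

end Cyclotomic

section Quadratic

/-- The sign encoded by a Boolean, with `true` for `-1`. -/
def boolSign (b : Bool) : ℤ := bif b then -1 else 1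

/-- Conditions on the quadratic characters of the forms in `c false`, `c true` and `e` under which
multiplication by `c false / e` on squares and by `c true / e` on nonsquares yields a maximally
nonassociative quasigroup. -/
structure IsNonassocTriple {F : Type*} [Field F] [Fintype F] [DecidableEq F] (e : F)
    (c : Bool → F) : Prop where
  ne_zero : e ≠ 0
  mul_eq : quadraticChar F (c false * c true) = 1
  sub_mul_sub_eq : quadraticChar F ((e - c false) * (e - c true)) = 1
  forms : ∀ i j r s,
    quadraticChar F (formN e c i r s * formD e c j r s) = boolSign (i == j) ∨
    quadraticChar F (formU e c i j r s * (e * formD e c j r s)) = boolSign (i == r) ∨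
    quadraticChar F (formV e c i j r s * (e * formD e c j r s)) = boolSign (i == s)

variable {F : Type*} [Field F] [Fintype F] [DecidableEq F]

theorem exists_quadraticChar_eq_boolSign (x : F) (hx : x ≠ 0) :
    ∃ b, quadraticChar F x = boolSign b := by
  rcases quadraticChar_dichotomy hx with h | h
  · exact ⟨false, h⟩
  · exact ⟨true, h⟩

theorem ne_zero_of_quadraticChar_eq_boolSign {x : F} {b : Bool}
    (hx : quadraticChar F x = boolSign b) : x ≠ 0 := by
  rintro rfl
  cases b <;> simp [boolSign] at hx

theorem quadraticChar_mul_ne_boolSign_beq {x y : F} {i j : Bool}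
    (h : quadraticChar F x * boolSign i = boolSign j * quadraticChar F y) :
    quadraticChar F (x * y) ≠ boolSign (i == j) := by
  rw [map_mul]
  rcases quadraticChar_isQuadratic F x with hx | hx | hx <;>
  rcases quadraticChar_isQuadratic F y with hy | hy | hy <;>
  rw [hx, hy] at h ⊢ <;> revert i j <;> decide

theorem injective_quadraticChar_mul_boolSign {d : Bool → F}
    (h : quadraticChar F (d false * d true) = 1) :
    Function.Injective fun i => quadraticChar F (d i) * boolSign i := by
  rw [map_mul] at h
  rcases Int.eq_one_or_neg_one_of_mul_eq_one' h with ⟨h0, h1⟩ | ⟨h0, h1⟩ <;>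
  rintro (_ | _) (_ | _) <;> simp [h0, h1, boolSign]

theorem IsNonassocTriple.hasMaxNonassoc {F : Type} [Field F] [Fintype F] [DecidableEq F] {e : F}
    {c : Bool → F} (h : IsNonassocTriple e c) : HasMaxNonassoc (Fintype.card F) := by
  have both_ne_zero {d : Bool → F} (hd : quadraticChar F (d false * d true) = 1) (i : Bool) :
      d i ≠ 0 := by
    have hmul := ne_zero_of_quadraticChar_eq_boolSign (b := false) hd
    cases i
    exacts [left_ne_zero_of_mul hmul, right_ne_zero_of_mul hmul]
  rw [← Nat.card_eq_fintype_card]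
  refine hasMaxNonassoc_of_monoidHom (χ := (quadraticChar F).toMonoidHom)
    exists_quadraticChar_eq_boolSign h.ne_zero
    (both_ne_zero h.mul_eq) (both_ne_zero (d := fun i => e - c i) h.sub_mul_sub_eq)
    (injective_quadraticChar_mul_boolSign h.mul_eq)
    (injective_quadraticChar_mul_boolSign (d := fun i => e - c i) h.sub_mul_sub_eq) ?_
  intro i j r s hN hU hV
  rcases h.forms i j r s with hND | hUD | hVD
  · exact quadraticChar_mul_ne_boolSign_beq hN hND
  · exact hU.elim (left_ne_zero_of_mul (ne_zero_of_quadraticChar_eq_boolSign hUD))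
      fun hU => quadraticChar_mul_ne_boolSign_beq hU hUD
  · exact hV.elim (left_ne_zero_of_mul (ne_zero_of_quadraticChar_eq_boolSign hVD))
      fun hV => quadraticChar_mul_ne_boolSign_beq hV hVD

end Quadratic

section Reciprocity

/-- Whether the prime `q` is a quadratic nonresidue modulo the prime `n`, computed from `n % q` and
`n % 8` by quadratic reciprocity and Euler's criterion. -/
def isNonresidue (q n : ℕ) : Bool :=
  if q = 2 then n % 8 == 3 || n % 8 == 5
  else (n ^ (q / 2) % q != 1) ^^ (q % 4 == 3 && n % 4 == 3)

theorem isNonresidue_add_mul_eq_mod (q i r : ℕ) :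
    isNonresidue q (24 * i + r) = isNonresidue q (24 * (i % q) + r) := by
  have h8 : (24 * i + r) % 8 = (24 * (i % q) + r) % 8 := by omega
  have h4 : (24 * i + r) % 4 = (24 * (i % q) + r) % 4 := by omega
  have hq : (24 * i + r) % q = (24 * (i % q) + r) % q := by simp [Nat.add_mod, Nat.mul_mod]
  have hpow : (24 * i + r) ^ (q / 2) % q = (24 * (i % q) + r) ^ (q / 2) % q := by
    rw [Nat.pow_mod, hq, ← Nat.pow_mod]
  simp only [isNonresidue, h8, h4, hpow]

theorem boolSign_xor (a b : Bool) : boolSign (a ^^ b) = boolSign a * boolSign b := by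
  revert a b; decide

variable {p q : ℕ} [Fact p.Prime] [Fact q.Prime]

theorem legendreSym_eq_boolSign_pow_mod (hpq : p ≠ q) :
    legendreSym q p = boolSign (p ^ (q / 2) % q != 1) := by
  have hp0 : ((p : ℤ) : ZMod q) ≠ 0 := by
    rw [Int.cast_natCast, Ne, ZMod.natCast_eq_zero_iff]
    exact fun h => hpq ((Nat.prime_dvd_prime_iff_eq Fact.out Fact.out).1 h).symm
  have pow_mod_iff : p ^ (q / 2) % q = 1 ↔ legendreSym q p = 1 := by
    rw [legendreSym.eq_one_iff q hp0, ZMod.euler_criterion q hp0,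
      ← Nat.mod_eq_of_lt (Fact.out : q.Prime).one_lt, Int.cast_natCast]
    simpa using (ZMod.natCast_eq_natCast_iff' (p ^ (q / 2)) 1 q).symm
  rcases legendreSym.eq_one_or_neg_one q hp0 with h | h
  · rw [h, pow_mod_iff.2 h]; rfl
  · rw [h, bne_iff_ne.2 fun hp => by rw [pow_mod_iff, h] at hp; omega]; rfl

theorem legendreSym_eq_boolSign_isNonresidue (hp : p ≠ 2) (hpq : p ≠ q) :
    legendreSym p q = boolSign (isNonresidue q p) := by
  have hp4 := Nat.odd_mod_four_iff.1 ((Fact.out : p.Prime).mod_two_eq_one_iff_ne_two.2 hp)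
  unfold isNonresidue
  split_ifs with hq
  · subst hq
    have h8 : p % 8 = 1 ∨ p % 8 = 3 ∨ p % 8 = 5 ∨ p % 8 = 7 := by omega
    rw [Nat.cast_ofNat, legendreSym.at_two hp, ZMod.χ₈_nat_eq_if_mod_eight]
    rcases h8 with h | h | h | h <;> simp [h, boolSign, show p % 2 = 1 by omega]
  have hq4 := Nat.odd_mod_four_iff.1 ((Fact.out : q.Prime).mod_two_eq_one_iff_ne_two.2 hq)
  rw [boolSign_xor, ← legendreSym_eq_boolSign_pow_mod hpq]
  rcases hp4 with hp4 | hp4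
  · simp [legendreSym.quadratic_reciprocity_one_mod_four hp4 hq, hp4, boolSign]
  rcases hq4 with hq4 | hq4
  · simp [legendreSym.quadratic_reciprocity_one_mod_four hq4 hp, hq4, boolSign]
  · simp [legendreSym.quadratic_reciprocity_three_mod_four hp4 hq4, hp4, hq4, boolSign]

theorem legendreSym_neg_one_eq_boolSign (hp : p ≠ 2) :
    legendreSym p (-1) = boolSign (p % 4 == 3) := by
  rw [legendreSym.at_neg_one hp]
  rcases Nat.odd_mod_four_iff.1 ((Fact.out : p.Prime).mod_two_eq_one_iff_ne_two.2 hp) with h | h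
  · simp [ZMod.χ₄_nat_one_mod_four h, h, boolSign]
  · simp [ZMod.χ₄_nat_three_mod_four h, h, boolSign]

end Reciprocity

section Bitsets

/-! Sets of indices are stored as the sets of binary digits of a natural number. -/

/-- The binary expansion `x` of width `w`, repeated `2 ^ t` times. -/
def tile : ℕ → ℕ → ℕ → ℕ
  | 0, _, x => x
  | t + 1, w, x => tile t (2 * w) (x ||| x <<< w)

/-- The set of all `i < B` for which `f (i % q)` holds. -/
def periodicBits (f : ℕ → Bool) (q B : ℕ) : ℕ :=
  tile (Nat.log2 (B / q) + 1) q (Nat.ofBits fun i : Fin q => f i) % 2 ^ B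

/-- The union of the sets in a list. -/
def unionBits (l : List ℕ) : ℕ := l.foldr (· ||| ·) 0

/-- The intersection of two sets indexed by a Boolean. -/
def interBits (f : Bool → ℕ) : ℕ := f false &&& f true

theorem testBit_tile (t : ℕ) {w x i : ℕ} (hx : x < 2 ^ w) (hi : i < w * 2 ^ t) :
    (tile t w x).testBit i = x.testBit (i % w) := by
  induction t generalizing w x with
  | zero => rw [tile, Nat.mod_eq_of_lt (by simpa using hi)]
  | succ t ih =>
    have hlt : x ||| x <<< w < 2 ^ (2 * w) := by
      refine Nat.or_lt_two_pow (hx.trans_le (by gcongr <;> omega)) ?_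
      rw [Nat.shiftLeft_eq, two_mul, pow_add]
      gcongr
    have hw : 0 < w := Nat.pos_of_ne_zero (by rintro rfl; simp at hi)
    rw [tile, ih hlt (by rw [pow_succ] at hi; linarith), Nat.testBit_or, Nat.testBit_shiftLeft]
    have hmod : i % w = i % (2 * w) % w := by rw [Nat.mod_mod_of_dvd _ (Dvd.intro_left 2 rfl)]
    have hlt2 : i % (2 * w) < 2 * w := Nat.mod_lt _ (by omega)
    rcases lt_or_ge (i % (2 * w)) w with h | h
    · simp [hmod, Nat.mod_eq_of_lt h, h]
    · have hbig : x.testBit (i % (2 * w)) = false :=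
        Nat.testBit_eq_false_of_lt (hx.trans_le (by gcongr; omega))
      have hsub : i % (2 * w) % w = i % (2 * w) - w := by
        rw [Nat.mod_eq_sub_mod h, Nat.mod_eq_of_lt (by omega)]
      rw [hmod, hsub, hbig]
      simp [h]

theorem testBit_periodicBits {f : ℕ → Bool} {q B i : ℕ} (hq : 0 < q) (hi : i < B) :
    (periodicBits f q B).testBit i = f (i % q) := by
  have hlt : i < q * 2 ^ (Nat.log2 (B / q) + 1) :=
    hi.trans (by rw [mul_comm]; exact (Nat.div_lt_iff_lt_mul hq).1 Nat.lt_log2_self)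
  rw [periodicBits, Nat.testBit_mod_two_pow, decide_eq_true hi, Bool.true_and,
    testBit_tile _ (Nat.ofBits_lt_two_pow _) hlt, Nat.testBit_ofBits_lt _ _ (Nat.mod_lt _ hq)]

theorem testBit_unionBits {l : List ℕ} {i : ℕ} :
    (unionBits l).testBit i ↔ ∃ x ∈ l, x.testBit i := by
  induction l with
  | nil => simp [unionBits]
  | cons x l ih =>
    rw [unionBits, List.foldr_cons, Nat.testBit_or, Bool.or_eq_true, ← unionBits, ih]
    simp

theorem testBit_interBits {f : Bool → ℕ} {i : ℕ} :
    (interBits f).testBit i ↔ ∀ b, (f b).testBit i := by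
  simp [interBits]

end Bitsets

section Covering

/-- The product of the sets in `T` prescribed by the prime factors of `x`: when the table `T` pairs
each prime `q` with the set of indices at which its character is `-1`, this is the set of indices at
which the character of `x` is `-1`. The result is `none` if `x` does not factor over `T` within the
given number of steps. -/
def signBits : ℕ → List (ℕ × ℕ) → ℕ → Option ℕ
  | 0, _, _ => none
  | _ + 1, [], x => if x = 1 then some 0 else none
  | n + 1, (q, m) :: T, x =>
    if x % q = 0 then (signBits n ((q, m) :: T) (x / q)).map (m ^^^ ·) else signBits n T x

/-- The indices below `B` at which the character of the integer `x` is known to be `boolSign b`,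
where `neg` is the set of indices at which the character of `-1` is `-1`. -/
def signSet (B neg : ℕ) (T : List (ℕ × ℕ)) (x : ℤ) (b : Bool) : ℕ :=
  match signBits 60 T x.natAbs with
  | none => 0
  | some m => m ^^^ (if x < 0 then neg else 0) ^^^ (bif b then 0 else 2 ^ B - 1)

/-- The conditions of `IsNonassocTriple`, for `K x b` the set on which the character of `x` is
`boolSign b`. -/
def tripleBits (K : ℤ → Bool → ℕ) (e a b : ℤ) : ℕ :=
  let c (i : Bool) := bif i then b else a
  K (e * e) false &&& K (a * b) false &&& K ((e - a) * (e - b)) false &&&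
    interBits fun i => interBits fun j => interBits fun r => interBits fun s =>
      K (formN e c i r s * formD e c j r s) (i == j) |||
      K (formU e c i j r s * (e * formD e c j r s)) (i == r) |||
      K (formV e c i j r s * (e * formD e c j r s)) (i == s)

/-- The primes over which the forms are factored. -/
def smallPrimes : List ℕ :=
  [2, 3, 5, 7, 11, 13, 17, 19, 23, 29, 31, 37, 41, 43, 47, 53, 59, 61, 67, 71]

theorem prime_of_mem_smallPrimes : ∀ q ∈ smallPrimes, q.Prime := by
  norm_num [smallPrimes]

theorem le_of_mem_smallPrimes : ∀ q ∈ smallPrimes, q ≤ 71 := by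
  decide

/-- The indices `i` for which `24 * i + r` is the square of a number below `326`. -/
def squareBits (r : ℕ) : ℕ :=
  unionBits ((List.range 326).map fun d =>
    if r ≤ d ^ 2 ∧ (d ^ 2 - r) % 24 = 0 then 2 ^ ((d ^ 2 - r) / 24) else 0)

/-- The indices `i < B` for which some triple in the list satisfies `IsNonassocTriple` modulo
`24 * i + r`, provided that this number is prime. -/
def nonassocBits (B r : ℕ) (triples : List (ℤ × ℤ × ℤ)) : ℕ :=
  let T := smallPrimes.map fun q => (q, periodicBits (fun i => isNonresidue q (24 * i + r)) q B)
  let K := signSet B (if r % 4 = 3 then 2 ^ B - 1 else 0) T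
  unionBits (triples.map fun t => tripleBits K t.1 t.2.1 t.2.2)

/-- The indices `i < B` for which `24 * i + r` is divisible by one of the small primes. -/
def sieveBits (B r : ℕ) : ℕ :=
  unionBits (smallPrimes.map fun q => periodicBits (fun i => (24 * i + r) % q == 0) q B)

/-- The triples in the list serve all primes `24 * i + r` with `i < B`. -/
def Covers (B r : ℕ) (triples : List (ℤ × ℤ × ℤ)) : Prop :=
  (squareBits r ||| sieveBits B r ||| nonassocBits B r triples) % 2 ^ B = 2 ^ B - 1

instance (B r : ℕ) (triples : List (ℤ × ℤ × ℤ)) : Decidable (Covers B r triples) :=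
  Nat.decEq _ _

theorem monoidHom_eq_boolSign_of_signBits (χ : ℤ →* ℤ) {i : ℕ} {T : List (ℕ × ℕ)}
    (hT : ∀ t ∈ T, χ t.1 = boolSign (t.2.testBit i)) {n x m : ℕ} (h : signBits n T x = some m) :
    χ x = boolSign (m.testBit i) := by
  induction n, T, x using signBits.induct generalizing m with
  | case1 => simp [signBits] at h
  | case2 n =>
    obtain rfl : 0 = m := by simpa [signBits] using h
    simp [boolSign]
  | case3 n x hx => simp [signBits, hx] at h
  | case4 n q b T x hx ih =>
    rw [signBits, if_pos hx, Option.map_eq_some_iff] at h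
    obtain ⟨m, hm, rfl⟩ := h
    rw [Nat.testBit_xor, boolSign_xor, ← hT _ List.mem_cons_self, ← ih hT hm, ← map_mul,
      ← Nat.cast_mul, Nat.mul_div_cancel' (Nat.dvd_of_mod_eq_zero hx)]
  | case5 n q b T x hx ih =>
    rw [signBits, if_neg hx] at h
    exact ih (fun t ht => hT t (List.mem_cons_of_mem _ ht)) h

theorem monoidHom_eq_boolSign_of_signSet (χ : ℤ →* ℤ) {B neg i : ℕ} {T : List (ℕ × ℕ)} {x : ℤ}
    {b : Bool} (hi : i < B) (hneg : χ (-1) = boolSign (neg.testBit i))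
    (hT : ∀ t ∈ T, χ t.1 = boolSign (t.2.testBit i)) (h : (signSet B neg T x b).testBit i) :
    χ x = boolSign b := by
  unfold signSet at h
  split at h
  · simp at h
  rename_i m hm
  have hx : χ x = boolSign ((m ^^^ if x < 0 then neg else 0).testBit i) := by
    have habs := monoidHom_eq_boolSign_of_signBits χ hT hm
    split_ifs with hx0
    · rw [Nat.testBit_xor, boolSign_xor, ← hneg, ← habs, ← map_mul,
        Int.ofNat_natAbs_of_nonpos hx0.le]
      simp
    · rw [Nat.xor_zero, ← habs, Int.natAbs_of_nonneg (not_lt.1 hx0)]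
  rw [hx]
  rw [Nat.testBit_xor] at h
  revert h
  generalize (m ^^^ _).testBit i = y
  cases b <;> cases y <;> simp [hi]

theorem isNonassocTriple_of_tripleBits {p n : ℕ} [Fact p.Prime] {K : ℤ → Bool → ℕ} {e a b : ℤ}
    (hK : ∀ x y, (K x y).testBit n → legendreSym p x = boolSign y)
    (h : (tripleBits K e a b).testBit n) :
    IsNonassocTriple (e : ZMod p) fun i => ((bif i then b else a : ℤ) : ZMod p) := by
  simp only [tripleBits, Nat.testBit_and, Nat.testBit_or, Bool.and_eq_true, Bool.or_eq_true,
    testBit_interBits] at h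
  obtain ⟨⟨⟨he, hmul⟩, hsub⟩, hforms⟩ := h
  have hχ {x : ℤ} {y : Bool} (hx : (K x y).testBit n) :
      quadraticChar (ZMod p) x = boolSign y := hK x y hx
  refine ⟨fun h0 => ?_, by exact_mod_cast hχ hmul, by exact_mod_cast hχ hsub, fun i j r s => ?_⟩
  · refine ne_zero_of_quadraticChar_eq_boolSign (hχ he) ?_
    rw [Int.cast_mul, h0, zero_mul]
  · simp only [← Int.cast_mul, intCast_formN, intCast_formD, intCast_formU, intCast_formV]
    rcases hforms i j r s with (hN | hU) | hV
    exacts [Or.inl (hχ hN), Or.inr (Or.inl (hχ hU)), Or.inr (Or.inr (hχ hV))]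

theorem exists_isNonassocTriple_of_nonassocBits {p B i r : ℕ} [Fact p.Prime]
    {triples : List (ℤ × ℤ × ℤ)} (hp : ∀ q ∈ smallPrimes, p ≠ q) (hpi : p = 24 * i + r) (hi : i < B)
    (h : (nonassocBits B r triples).testBit i) :
    ∃ (e : ZMod p) (c : Bool → ZMod p), IsNonassocTriple e c := by
  obtain ⟨_, hmem, hbit⟩ := testBit_unionBits.1 h
  obtain ⟨⟨e, a, b⟩, -, rfl⟩ := List.mem_map.1 hmem
  refine ⟨_, _, isNonassocTriple_of_tripleBits (fun x y hxy => ?_) hbit⟩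
  have hp2 : p ≠ 2 := hp 2 (by decide)
  refine monoidHom_eq_boolSign_of_signSet (legendreSym.hom p : ℤ →* ℤ) hi ?_ ?_ hxy
  · have hmod : p % 4 = r % 4 := by omega
    have htest : (if r % 4 = 3 then 2 ^ B - 1 else 0).testBit i = (p % 4 == 3) := by
      split_ifs with hr <;> simp [hr, hmod, hi]
    exact (legendreSym_neg_one_eq_boolSign hp2).trans (by rw [htest])
  · intro t ht
    obtain ⟨q, hq, rfl⟩ := List.mem_map.1 ht
    have : Fact q.Prime := ⟨prime_of_mem_smallPrimes q hq⟩
    rw [testBit_periodicBits (Fact.out : q.Prime).pos hi, ← isNonresidue_add_mul_eq_mod, ← hpi]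
    exact legendreSym_eq_boolSign_isNonresidue hp2 (hp q hq)

theorem not_prime_of_squareBits {i r : ℕ} (h : (squareBits r).testBit i) :
    ¬(24 * i + r).Prime := by
  obtain ⟨_, hmem, hbit⟩ := testBit_unionBits.1 h
  obtain ⟨d, -, rfl⟩ := List.mem_map.1 hmem
  split_ifs at hbit with hd
  · obtain rfl : (d ^ 2 - r) / 24 = i := by simpa [Nat.testBit_two_pow] using hbit
    rw [show 24 * ((d ^ 2 - r) / 24) + r = d ^ 2 by omega]
    exact Nat.Prime.not_prime_pow le_rfl
  · simp at hbit

theorem exists_dvd_of_sieveBits {B i r : ℕ} (hi : i < B) (h : (sieveBits B r).testBit i) :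
    ∃ q ∈ smallPrimes, q ∣ 24 * i + r := by
  obtain ⟨_, hmem, hbit⟩ := testBit_unionBits.1 h
  obtain ⟨q, hq, rfl⟩ := List.mem_map.1 hmem
  rw [testBit_periodicBits (prime_of_mem_smallPrimes q hq).pos hi, beq_iff_eq] at hbit
  refine ⟨q, hq, Nat.dvd_of_mod_eq_zero ?_⟩
  rw [← hbit]
  simp [Nat.add_mod, Nat.mul_mod]

theorem Covers.hasMaxNonassoc {B r p : ℕ} {triples : List (ℤ × ℤ × ℤ)} (h : Covers B r triples)
    (hp : p.Prime) (hp71 : 71 < p) (hrp : r ≤ p) (hmod : p % 24 = r % 24) (hpB : p < 24 * B + r) :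
    HasMaxNonassoc p := by
  obtain ⟨i, rfl⟩ : ∃ i, p = 24 * i + r := ⟨(p - r) / 24, by omega⟩
  have hi : i < B := by omega
  have hne (q : ℕ) (hq : q ∈ smallPrimes) : 24 * i + r ≠ q :=
    fun h => absurd (le_of_mem_smallPrimes q hq) (by omega)
  have hbit := congrArg (·.testBit i) h
  simp only [Nat.testBit_mod_two_pow, Nat.testBit_two_pow_sub_one, hi, decide_true, Bool.true_and,
    Nat.testBit_or, Bool.or_eq_true] at hbit
  rcases hbit with (hsq | hdvd) | hnonassoc
  · exact absurd hp (not_prime_of_squareBits hsq)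
  · obtain ⟨q, hq, hqp⟩ := exists_dvd_of_sieveBits hi hdvd
    exact absurd ((Nat.prime_dvd_prime_iff_eq (prime_of_mem_smallPrimes q hq) hp).1 hqp).symm
      (hne q hq)
  · have : Fact (24 * i + r).Prime := ⟨hp⟩
    obtain ⟨e, c, hec⟩ := exists_isNonassocTriple_of_nonassocBits hne rfl hi hnonassoc
    simpa only [ZMod.card] using hec.hasMaxNonassoc

end Covering

-- The triples in this and the following `covers_*` tables were found by computer search.
theorem covers_73 : Covers 4414 73
    [(6, 10, 5), (6, 14, 7), (6, 15, 5), (6, 45, -20), (16, 54, -3), (15, 65, 13), (7, 35, 5),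
     (6, 48, 13), (2, 44, 11), (14, 77, 11), (12, 44, 11), (10, 78, -75), (12, 17, -68),
     (6, 39, -16), (18, 28, 21), (12, 39, 13), (18, 57, 31), (4, 15, 10), (6, 57, 38),
     (6, 50, -5), (9, 51, -19), (4, 66, -27), (1, 12, -10), (12, 51, 17), (19, 43, 31),
     (13, 38, 19), (16, 39, -78), (4, -39, -78), (20, 68, 17), (18, -20, -75), (16, 37, 23),
     (20, 55, -22), (19, 80, 10), (18, 78, 13), (16, 27, -72), (15, 66, -2), (15, 57, -38),
     (15, 51, 34), (13, 61, 29), (12, 41, -46)] := by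
  decide +kernel

theorem covers_77 : Covers 4414 77
    [(4, 44, -11), (12, 4, -15), (3, 12, 8), (3, 5, 1), (3, 10, 6), (8, 7, 1), (3, 6, 1),
     (14, 50, 35), (4, 5, -20), (2, 8, 3), (7, 19, -7), (2, 12, 3), (1, 15, -3), (6, 12, 5),
     (14, 24, 21), (14, 49, 24), (7, 8, -56), (9, 54, -4), (14, 35, 23)] := by
  decide +kernel

theorem covers_85 : Covers 4414 85
    [(3, 6, 2), (3, 9, 5), (3, 8, 6), (5, 6, -30), (15, 40, 8), (5, 8, 6), (15, 24, 10),
     (15, 2, -50), (15, 32, 30)] := by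
  decide +kernel

theorem covers_89 : Covers 4413 89
    [(2, 3, -6), (8, 24, 3), (5, 6, 3), (4, 28, 7), (10, 16, -5), (5, 15, 6), (1, 6, 3),
     (7, 42, 6), (8, 48, 3), (4, 12, -3), (7, 42, -6), (2, 3, -12), (14, 42, 27)] := by
  decide +kernel

theorem covers_79 : Covers 116206 79
    [(8, 40, 5), (5, 45, -36), (11, 55, 5), (2, 15, -10), (9, 14, -6), (9, 54, 29), (3, 21, 4),
     (12, 28, 9), (7, 42, 2), (8, 20, 11), (4, 7, 3), (1, 21, 6), (16, 100, 25), (12, 22, -3),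
     (4, 18, 1), (4, 36, 9), (7, -4, -42), (8, 36, 15), (16, 28, 7), (12, 25, 20), (1, 64, -20),
     (1, 9, -6), (6, 15, 7), (5, 14, 2), (5, 48, -60), (1, 15, -5), (7, 35, 25), (8, 9, -6),
     (3, 7, -24), (11, 99, -45), (18, 57, -38), (11, 22, 10), (15, 53, -15), (19, 38, -22),
     (8, 15, 9), (19, 69, 9), (19, 38, -12)] := by
  decide +kernel

theorem covers_83 : Covers 116206 83
    [(6, 9, 4), (3, 12, 4), (5, 14, -35), (12, 28, 21), (10, 25, 4), (4, 5, -2), (13, 38, -52),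
     (14, 13, 11), (15, 21, -5), (1, 4, -28), (5, 20, -8), (5, 40, 2), (14, 13, 10), (13, 22, 16),
     (7, 11, 1), (4, 15, 5), (12, 48, 23), (3, 21, 13), (1, -14, -11), (3, 33, 2), (15, 60, -2),
     (13, -3, -12)] := by
  decide +kernel

theorem covers_91 : Covers 116205 91
    [(12, 16, 9), (3, 9, 1)] := by
  decide +kernel

theorem covers_95 : Covers 116205 95
    [(5, 20, -4), (8, 12, 9), (7, 42, -3), (5, 8, 6), (5, 9, 6), (16, 30, 5), (10, 16, -5),
     (17, 68, -4), (15, 18, 16), (9, 24, 14), (3, 9, 4), (1, 4, 3), (5, 27, 9), (7, 15, 9),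
     (3, 27, 5), (20, 75, 24), (4, 16, 7), (4, 9, 5), (8, 35, 14), (7, 40, 10), (20, 24, 21),
     (7, 12, 8), (11, 77, -7), (9, 49, 14), (20, 54, 9), (9, 15, 11), (7, 21, 11), (3, 25, 5),
     (13, 52, 21), (13, 52, 22), (13, 52, -38), (15, 72, 20), (5, 45, 37), (20, 40, 27),
     (8, 27, 10), (19, 76, 22), (7, -2, -28), (17, 27, 18), (12, 26, 15), (11, 44, 14),
     (19, 57, 31), (17, -22, -74), (12, 16, 13), (19, 25, -95), (8, 15, 9), (20, 98, 35),
     (20, 96, 39), (20, 80, -41), (19, 76, -2), (19, -10, -48), (18, 27, 20), (17, 34, -16)] := by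
  decide +kernel

theorem hasMaxNonassoc_of_prime_of_lt {p : ℕ} (hp : p.Prime) (hp71 : 71 < p)
    (h1 : p % 4 = 1 → p < 106000) (h3 : p % 4 = 3 → p < 2789000) : HasMaxNonassoc p := by
  have hp2 : p % 2 ≠ 0 := fun h => by
    have := (Nat.prime_dvd_prime_iff_eq Nat.prime_two hp).1 (Nat.dvd_of_mod_eq_zero h)
    omega
  have hp3 : p % 3 ≠ 0 := fun h => by
    have := (Nat.prime_dvd_prime_iff_eq Nat.prime_three hp).1 (Nat.dvd_of_mod_eq_zero h)
    omega
  have hmod : p % 24 = 1 ∨ p % 24 = 5 ∨ p % 24 = 7 ∨ p % 24 = 11 ∨ p % 24 = 13 ∨ p % 24 = 17 ∨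
      p % 24 = 19 ∨ p % 24 = 23 := by omega
  rcases hmod with h | h | h | h | h | h | h | h
  · exact covers_73.hasMaxNonassoc hp hp71 (by omega) (by omega) (by omega)
  · exact covers_77.hasMaxNonassoc hp hp71 (by omega) (by omega) (by omega)
  · exact covers_79.hasMaxNonassoc hp hp71 (by omega) (by omega) (by omega)
  · exact covers_83.hasMaxNonassoc hp hp71 (by omega) (by omega) (by omega)
  · exact covers_85.hasMaxNonassoc hp hp71 (by omega) (by omega) (by omega)
  · exact covers_89.hasMaxNonassoc hp hp71 (by omega) (by omega) (by omega)
  · exact covers_91.hasMaxNonassoc hp hp71 (by omega) (by omega) (by omega)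
  · exact covers_95.hasMaxNonassoc hp hp71 (by omega) (by omega) (by omega)

section FieldCode

/-- A presentation `α ^ k = red` of a field of order `p ^ k` generated by `α`. The natural number
`a` stands for the polynomial in `α` whose coefficients are the `k` lowest base-`p` digits
of `a`. -/
structure FieldCode where
  p : ℕ
  k : ℕ
  red : ℕ

namespace FieldCode

variable (C : FieldCode)

/-- The digitwise linear combination `x • a + y • b`, up to the digit of index `n`. -/
def linComb : ℕ → ℕ → ℕ → ℕ → ℕ → ℕ
  | 0, _, _, _, _ => 0
  | n + 1, x, a, y, b => (x * a + y * b) % C.p + C.p * linComb n x (a / C.p) y (b / C.p)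

/-- The code of a sum. -/
def add (a b : ℕ) : ℕ := C.linComb C.k 1 a 1 b

/-- The code of a difference. -/
def sub (a b : ℕ) : ℕ := C.linComb C.k 1 a (C.p - 1) b

/-- The code of `α` times a given element. -/
def mulRoot (a : ℕ) : ℕ := C.linComb C.k 1 (C.p * a) (C.p * a / C.p ^ C.k) C.red

/-- The code of `a` times the polynomial given by the `n` lowest digits of `b`, by Horner's rule. -/
def mulDigits : ℕ → ℕ → ℕ → ℕ
  | 0, _, _ => 0
  | n + 1, a, b => C.linComb C.k 1 (C.mulRoot (mulDigits n a (b / C.p))) b a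

/-- The code of a product. -/
def mul (a b : ℕ) : ℕ := C.mulDigits C.k a b

/-- The code of a power, by repeated squaring. -/
def pow (a n : ℕ) : ℕ :=
  n.bits.foldr (fun d s => bif d then C.mul a (C.mul s s) else C.mul s s) 1

/-- The exponent for which `x ↦ x ^ exponent e` maps the nonzero field elements to the `e`-th roots
of unity. -/
def exponent (e : ℕ) : ℕ := (C.p ^ C.k - 1) / e

/-- The set of codes of the powers `α ^ (i + e * n)` with `n < exponent e`, as a bitset. -/
def classBits (e i : ℕ) : ℕ :=
  unionBits ((List.iterate C.mulRoot^[e] (C.mulRoot^[i] 1) (C.exponent e)).map (2 ^ ·))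

/-- The `i < e` for which `a` codes a power `α ^ n` with `n % e = i`, if there is one. -/
def classOf (e a : ℕ) : Option ℕ := (List.range e).find? fun i => (C.classBits e i).testBit a

/-- `a` and `b` code powers of `α` whose exponents do not differ by `j - i` modulo `e`. -/
def Differ (e a b i j : ℕ) : Bool :=
  match C.classOf e a, C.classOf e b with
  | some m, some n => (m + i) % e != (j + n) % e
  | _, _ => false

/-- `α` is a root of unity and `x ↦ x ^ exponent e` takes a value other than `1` at `α`; the
latter is expressed by a difference being a power of `α`. -/
def HasCharacter (e : ℕ) : Prop :=
  C.pow (C.mulRoot 1) (C.p ^ C.k - 1) = 1 ∧ (C.p ^ C.k - 1) % e = 0 ∧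
    (C.classOf e (C.sub (C.pow (C.mulRoot 1) (C.exponent e)) 1)).isSome

/-- The constants `c` satisfy the conditions of `hasMaxNonassoc_of_monoidHom` for the character of
order `e`. -/
def IsNonassoc {e : ℕ} (c : Fin e → ℕ) : Prop :=
  (∀ i j : Fin e, i ≠ j →
    C.Differ e (c i) (c j) i j ∧ C.Differ e (C.sub 1 (c i)) (C.sub 1 (c j)) i j) ∧
  ∀ i j r s : Fin e,
    let D := C.sub (C.mul (c r) (c j)) (c s)
    let N := C.sub (C.sub (C.add (c i) (c s)) (c r)) (C.mul (c s) (c i))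
    C.Differ e N D i j ∨ C.Differ e (C.add (C.mul (c j) N) D) D i r ∨
      C.Differ e (C.add N (C.mul (C.sub 1 (c i)) D)) D i s

instance (e : ℕ) : Decidable (C.HasCharacter e) := inferInstanceAs (Decidable (_ ∧ _))

instance {e : ℕ} (c : Fin e → ℕ) : Decidable (C.IsNonassoc c) :=
  inferInstanceAs (Decidable (_ ∧ _))

/-- The value of the polynomial coded by the `n` lowest digits of `a`. -/
def eval {R : Type*} [Semiring R] (α : R) : ℕ → ℕ → R
  | 0, _ => 0
  | n + 1, a => a + α * eval α n (a / C.p)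

/-- `α` is a root of the defining polynomial of the presentation, in characteristic `p`. -/
structure IsRoot {R : Type*} [Semiring R] (α : R) : Prop where
  natCast_eq_zero : (C.p : R) = 0
  pow_eq_eval : α ^ C.k = C.eval α C.k C.red

variable {C}

section CommRing

variable {R S : Type*} [CommRing R] [CommRing S] {α : R}

theorem map_eval (f : R →+* S) (α : R) (n a : ℕ) : f (C.eval α n a) = C.eval (f α) n a := by
  induction n generalizing a with
  | zero => exact map_zero f
  | succ n ih => rw [eval, map_add, map_natCast, map_mul, ih, eval]

theorem eval_zero (α : R) (n : ℕ) : C.eval α n 0 = 0 := by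
  induction n with
  | zero => rfl
  | succ n ih => rw [eval, Nat.zero_div, ih, Nat.cast_zero, mul_zero, add_zero]

theorem eval_one (hp : 1 < C.p) (hk : C.k ≠ 0) (α : R) : C.eval α C.k 1 = 1 := by
  obtain ⟨n, hn⟩ := Nat.exists_eq_succ_of_ne_zero hk
  rw [hn, eval, Nat.div_eq_of_lt hp, eval_zero, Nat.cast_one, mul_zero, add_zero]

theorem eval_succ_eq_add_top (α : R) (n a : ℕ) :
    C.eval α (n + 1) a = C.eval α n a + (a / C.p ^ n : ℕ) * α ^ n := by
  induction n generalizing a with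
  | zero => simp [eval]
  | succ n ih =>
    rw [eval, ih, eval, Nat.div_div_eq_div_mul, ← pow_succ']
    ring

theorem eval_linComb (hp : 0 < C.p) (h0 : (C.p : R) = 0) (n x a y b : ℕ) :
    C.eval α n (C.linComb n x a y b) = x * C.eval α n a + y * C.eval α n b := by
  induction n generalizing a b with
  | zero => simp only [eval, mul_zero, add_zero]
  | succ n ih =>
    have hcast (m : ℕ) : ((m % C.p : ℕ) : R) = m := by
      conv_rhs => rw [← Nat.mod_add_div m C.p, Nat.cast_add, Nat.cast_mul, h0, zero_mul, add_zero]
    have hdiv : ((x * a + y * b) % C.p + C.p * C.linComb n x (a / C.p) y (b / C.p)) / C.p =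
        C.linComb n x (a / C.p) y (b / C.p) := by
      rw [Nat.add_mul_div_left _ _ hp, Nat.div_eq_of_lt (Nat.mod_lt _ hp), zero_add]
    rw [linComb, eval, hdiv, ih, Nat.cast_add, hcast, Nat.cast_mul, h0, eval, eval]
    push_cast
    ring

variable (hC : C.IsRoot α) (hp : 1 < C.p)
include hC hp

theorem eval_add (a b : ℕ) :
    C.eval α C.k (C.add a b) = C.eval α C.k a + C.eval α C.k b := by
  rw [add, eval_linComb (zero_lt_one.trans hp) hC.natCast_eq_zero, Nat.cast_one, one_mul, one_mul]

theorem eval_sub (a b : ℕ) :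
    C.eval α C.k (C.sub a b) = C.eval α C.k a - C.eval α C.k b := by
  rw [sub, eval_linComb (zero_lt_one.trans hp) hC.natCast_eq_zero, Nat.cast_sub hp.le,
    hC.natCast_eq_zero, Nat.cast_one]
  ring

theorem eval_mulRoot (a : ℕ) : C.eval α C.k (C.mulRoot a) = α * C.eval α C.k a := by
  have hshift : C.eval α (C.k + 1) (C.p * a) = α * C.eval α C.k a := by
    rw [eval, Nat.mul_div_cancel_left a (zero_lt_one.trans hp), Nat.cast_mul, hC.natCast_eq_zero,
      zero_mul, zero_add]
  rw [mulRoot, eval_linComb (zero_lt_one.trans hp) hC.natCast_eq_zero, ← hC.pow_eq_eval, ← hshift,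
    eval_succ_eq_add_top, Nat.cast_one, one_mul]

theorem eval_mul (a b : ℕ) : C.eval α C.k (C.mul a b) = C.eval α C.k a * C.eval α C.k b := by
  have hdigits (n : ℕ) :
      C.eval α C.k (C.mulDigits n a b) = C.eval α C.k a * C.eval α n b := by
    induction n generalizing b with
    | zero => rw [mulDigits, eval_zero, eval, mul_zero]
    | succ n ih =>
      rw [mulDigits, eval_linComb (zero_lt_one.trans hp) hC.natCast_eq_zero, eval_mulRoot hC hp, ih,
        eval, Nat.cast_one]
      ring
  exact hdigits C.k

theorem eval_mulRoot_iterate (n a : ℕ) :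
    C.eval α C.k (C.mulRoot^[n] a) = α ^ n * C.eval α C.k a := by
  induction n with
  | zero => rw [pow_zero, one_mul, Function.iterate_zero_apply]
  | succ n ih => rw [Function.iterate_succ_apply', eval_mulRoot hC hp, ih, pow_succ', mul_assoc]

variable (hk : C.k ≠ 0)
include hk

theorem eval_pow (a n : ℕ) : C.eval α C.k (C.pow a n) = C.eval α C.k a ^ n := by
  unfold pow
  induction n using Nat.binaryRec' with
  | zero => rw [Nat.zero_bits, List.foldr_nil, eval_one hp hk, pow_zero]
  | bit d n hd ih =>
    rw [Nat.bits_append_bit _ _ hd, List.foldr_cons]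
    cases d <;> simp only [cond_true, cond_false, eval_mul hC hp, ih, Nat.bit, pow_add, pow_mul] <;>
      ring

theorem exists_eval_eq_pow_of_classBits {e i a : ℕ} (h : (C.classBits e i).testBit a) :
    ∃ n, C.eval α C.k a = α ^ (i + e * n) := by
  obtain ⟨_, hmem, hbit⟩ := testBit_unionBits.1 h
  obtain ⟨b, hb, rfl⟩ := List.mem_map.1 hmem
  obtain ⟨n, -, rfl⟩ := List.mem_iterate.1 hb
  rw [Nat.testBit_two_pow, decide_eq_true_eq] at hbit
  refine ⟨n, ?_⟩
  rw [← hbit, ← Function.iterate_mul, eval_mulRoot_iterate hC hp, eval_mulRoot_iterate hC hp,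
    eval_one hp hk, mul_one, pow_add, mul_comm]

theorem IsRoot.pow_eq_one {e : ℕ} (h : C.HasCharacter e) : α ^ (C.p ^ C.k - 1) = 1 := by
  have := congrArg (C.eval α C.k) h.1
  rwa [eval_pow hC hp hk, eval_mulRoot hC hp, eval_one hp hk, mul_one] at this

end CommRing

theorem HasCharacter.exponent_mul_self {e : ℕ} (h : C.HasCharacter e) :
    C.exponent e * e = C.p ^ C.k - 1 :=
  Nat.div_mul_cancel (Nat.dvd_of_mod_eq_zero h.2.1)

section Root

open Polynomial

theorem degree_eval_X_lt {R : Type*} [CommRing R] [Nontrivial R] (n a : ℕ) :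
    (C.eval (X : R[X]) n a).degree < n := by
  induction n generalizing a with
  | zero => simp [eval]
  | succ n ih =>
    refine (degree_add_le _ _).trans_lt (max_lt ?_ ?_)
    · exact (degree_natCast_le a).trans_lt (by exact_mod_cast n.succ_pos)
    · rw [mul_comm, degree_mul_X, Nat.cast_succ]
      exact WithBot.add_lt_add_right WithBot.one_ne_bot (ih _)

variable (C) in
/-- The defining polynomial `X ^ k - red` of the presentation. -/
noncomputable def poly : (ZMod C.p)[X] := X ^ C.k - C.eval X C.k C.red

theorem isRoot_iff_aeval_poly {R : Type*} [CommRing R] [Algebra (ZMod C.p) R] {α : R} :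
    C.IsRoot α ↔ aeval α C.poly = 0 := by
  have hp : (C.p : R) = 0 := by
    rw [← map_natCast (algebraMap (ZMod C.p) R), CharP.cast_eq_zero, map_zero]
  have hα : aeval α C.poly = α ^ C.k - C.eval α C.k C.red := by
    have := map_eval (C := C) (aeval (R := ZMod C.p) α).toRingHom X C.k C.red
    rw [AlgHom.toRingHom_eq_coe, RingHom.coe_coe, aeval_X] at this
    rw [poly, map_sub, map_pow, aeval_X, this]
  rw [hα, sub_eq_zero]
  exact ⟨IsRoot.pow_eq_eval, fun h => ⟨hp, h⟩⟩

variable [Fact C.p.Prime] {e : ℕ} (hk : C.k ≠ 0) (h : C.HasCharacter e)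
include hk h

theorem poly_dvd_X_pow_sub_X : C.poly ∣ X ^ C.p ^ C.k - X := by
  have hp : 1 < C.p := (Fact.out : C.p.Prime).one_lt
  have hroot : C.IsRoot (AdjoinRoot.root C.poly) :=
    isRoot_iff_aeval_poly.2 (by rw [AdjoinRoot.aeval_eq, AdjoinRoot.mk_self])
  rw [← AdjoinRoot.mk_eq_zero, map_sub, map_pow, AdjoinRoot.mk_X,
    ← pow_sub_one_mul (pow_ne_zero _ (zero_lt_one.trans hp).ne'), hroot.pow_eq_one hp hk h, one_mul,
    sub_self]

theorem exists_isRoot {F : Type*} [Field F] [Algebra (ZMod C.p) F]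
    (hF : Nat.card F = C.p ^ C.k) : ∃ α : F, C.IsRoot α := by
  have hdegree : C.poly.degree = C.k := by
    rw [poly, degree_sub_eq_left_of_degree_lt, degree_X_pow]
    rw [degree_X_pow]
    exact degree_eval_X_lt _ _
  have hne : (X ^ Nat.card F - X : F[X]) ≠ 0 :=
    hF ▸ FiniteField.X_pow_card_pow_sub_X_ne_zero F hk (Fact.out : C.p.Prime).one_lt
  have hdvd : C.poly.map (algebraMap (ZMod C.p) F) ∣ X ^ Nat.card F - X := by
    simpa only [hF, Polynomial.map_sub, Polynomial.map_pow, map_X] using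
      Polynomial.map_dvd (algebraMap (ZMod C.p) F) (poly_dvd_X_pow_sub_X hk h)
  obtain ⟨α, hα⟩ := (splits_X_pow_nat_card_sub_X.of_dvd hne hdvd).exists_eval_eq_zero
    (by rw [degree_map, hdegree]; exact_mod_cast hk)
  exact ⟨α, isRoot_iff_aeval_poly.2 (eval_map_algebraMap C.poly α ▸ hα)⟩

end Root

section Field

variable {F : Type*} [Field F] {α : F} {e : ℕ} (hC : C.IsRoot α) (hp : 1 < C.p) (hk : C.k ≠ 0)
  (h : C.HasCharacter e)
include hC hp hk h

theorem IsRoot.ne_zero : α ≠ 0 := by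
  rintro rfl
  have hq : C.p ^ C.k - 1 ≠ 0 := (Nat.sub_pos_of_lt (Nat.one_lt_pow hk hp)).ne'
  exact zero_ne_one ((zero_pow hq).symm.trans (hC.pow_eq_one hp hk h))

theorem eval_ne_zero_and_pow_eq {a i : ℕ} (ha : C.classOf e a = some i) :
    C.eval α C.k a ≠ 0 ∧ C.eval α C.k a ^ C.exponent e =
      (α ^ C.exponent e) ^ i := by
  obtain ⟨n, hn⟩ := exists_eval_eq_pow_of_classBits hC hp hk
    (List.find?_some (p := fun i => (C.classBits e i).testBit a) ha)
  refine ⟨hn ▸ pow_ne_zero _ (hC.ne_zero hp hk h), ?_⟩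
  have hone : α ^ (e * n * C.exponent e) = 1 := by
    rw [mul_comm, ← mul_assoc, h.exponent_mul_self, pow_mul, hC.pow_eq_one hp hk h, one_pow]
  rw [hn, ← pow_mul, add_mul, pow_add, hone, mul_one, mul_comm, pow_mul]

theorem isPrimitiveRoot_pow (he : e.Prime) :
    IsPrimitiveRoot (α ^ C.exponent e) e := by
  have : Fact e.Prime := ⟨he⟩
  obtain ⟨i, hi⟩ := Option.isSome_iff_exists.1 h.2.2
  have hne := (eval_ne_zero_and_pow_eq hC hp hk h hi).1
  rw [eval_sub hC hp, eval_pow hC hp hk, eval_mulRoot hC hp, eval_one hp hk, mul_one,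
    sub_ne_zero] at hne
  refine IsPrimitiveRoot.iff_orderOf.2 (orderOf_eq_prime ?_ hne)
  rw [← pow_mul, h.exponent_mul_self, hC.pow_eq_one hp hk h]

theorem Differ.ne_zero_and_pow_mul_ne (he : e.Prime) {a b i j : ℕ} (hab : C.Differ e a b i j) :
    C.eval α C.k a ≠ 0 ∧
      C.eval α C.k a ^ C.exponent e * (α ^ C.exponent e) ^ i ≠
        (α ^ C.exponent e) ^ j * C.eval α C.k b ^ C.exponent e := by
  have hζ := isPrimitiveRoot_pow hC hp hk h he
  unfold Differ at hab
  split at hab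
  next m n hm hn =>
    refine ⟨(eval_ne_zero_and_pow_eq hC hp hk h hm).1, fun heq => ?_⟩
    rw [(eval_ne_zero_and_pow_eq hC hp hk h hm).2, (eval_ne_zero_and_pow_eq hC hp hk h hn).2,
      ← pow_add, ← pow_add, (hζ.isOfFinOrder he.ne_zero).pow_inj_mod, ← hζ.eq_orderOf] at heq
    exact bne_iff_ne.1 hab heq
  · cases hab

end Field

theorem IsNonassoc.hasMaxNonassoc {e : ℕ} {c : Fin e → ℕ} (hc : C.IsNonassoc c)
    (h : C.HasCharacter e) (he : e.Prime) (hp : C.p.Prime) (hk : C.k ≠ 0) :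
    HasMaxNonassoc (C.p ^ C.k) := by
  have : Fact C.p.Prime := ⟨hp⟩
  have : NeZero e := ⟨he.ne_zero⟩
  have : Nontrivial (Fin e) := Fin.nontrivial_iff_two_le.2 he.two_le
  have hF : Nat.card (GaloisField C.p C.k) = C.p ^ C.k := GaloisField.card C.p C.k hk
  obtain ⟨α, hC⟩ := exists_isRoot hk h hF
  have hζ := isPrimitiveRoot_pow hC hp.one_lt hk h he
  have hdiffer {a b i j : ℕ} (hab : C.Differ e a b i j) :=
    Differ.ne_zero_and_pow_mul_ne hC hp.one_lt hk h he hab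
  have hone_sub (i : Fin e) : 1 - C.eval α C.k (c i) = C.eval α C.k (C.sub 1 (c i)) := by
    rw [eval_sub hC hp.one_lt, eval_one hp.one_lt hk]
  rw [← hF]
  refine hasMaxNonassoc_of_monoidHom (χ := powMonoidHom (C.exponent e)) (e := 1)
    (v := fun i : Fin e => (α ^ C.exponent e) ^ (i : ℕ)) (c := fun i => C.eval α C.k (c i))
    (fun x hx => ?_) one_ne_zero (fun i => ?_) (fun i => ?_) (fun i j hij => ?_) (fun i j hij => ?_)
    fun i j r s hN hU hV => ?_
  · have hpow : (x ^ C.exponent e) ^ e = 1 := by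
      have := Fintype.ofFinite (GaloisField C.p C.k)
      rw [← pow_mul, h.exponent_mul_self, ← hF, Nat.card_eq_fintype_card]
      exact FiniteField.pow_card_sub_one_eq_one x hx
    obtain ⟨i, hi, hxi⟩ := hζ.eq_pow_of_pow_eq_one hpow
    exact ⟨⟨i, hi⟩, hxi.symm⟩
  · obtain ⟨j, hj⟩ := exists_ne i
    exact (hdiffer (hc.1 i j hj.symm).1).1
  · obtain ⟨j, hj⟩ := exists_ne i
    exact hone_sub i ▸ (hdiffer (hc.1 i j hj.symm).2).1
  · by_contra hne
    exact (hdiffer (hc.1 i j hne).1).2 (hij.trans (mul_comm _ _))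
  · by_contra hne
    simp only [hone_sub] at hij
    exact (hdiffer (hc.1 i j hne).2).2 (hij.trans (mul_comm _ _))
  · simp only [formU, formV, formN, formD, mul_one, one_mul, hone_sub, ← eval_add hC hp.one_lt,
      ← eval_sub hC hp.one_lt, ← eval_mul hC hp.one_lt] at hN hU hV
    rcases hc.2 i j r s with hD | hD | hD
    · exact (hdiffer hD).2 hN
    · exact hU.elim (hdiffer hD).1 (hdiffer hD).2
    · exact hV.elim (hdiffer hD).1 (hdiffer hD).2

end FieldCode

end FieldCode

/-- Presentations with pairs of constants, listed by order. Here `α` is primitive, and for prime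
order the presentation `⟨p, 1, g⟩` says that `α` is the primitive root `g`. -/
def quadraticCodes : List (FieldCode × ℕ × ℕ) :=
  [(⟨3, 2, 7⟩, 3, 8), (⟨13, 1, 2⟩, 2, 5), (⟨17, 1, 3⟩, 4, 8), (⟨19, 1, 2⟩, 14, 15),
    (⟨23, 1, 5⟩, 4, 13), (⟨5, 2, 23⟩, 5, 10), (⟨3, 3, 5⟩, 2, 10), (⟨29, 1, 2⟩, 2, 10),
    (⟨31, 1, 3⟩, 5, 20), (⟨37, 1, 2⟩, 2, 13), (⟨41, 1, 6⟩, 3, 11), (⟨43, 1, 3⟩, 3, 27),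
    (⟨47, 1, 5⟩, 2, 8), (⟨7, 2, 46⟩, 7, 9), (⟨53, 1, 2⟩, 2, 48), (⟨59, 1, 2⟩, 4, 21),
    (⟨61, 1, 2⟩, 2, 53), (⟨67, 1, 2⟩, 3, 45), (⟨71, 1, 7⟩, 2, 5), (⟨11, 2, 114⟩, 11, 22),
    (⟨5, 3, 13⟩, 2, 11), (⟨7, 3, 33⟩, 2, 23), (⟨11, 3, 117⟩, 2, 153)]

/-- Presentations of the fields of order `2 ^ 6`, `2 ^ 8` and `2 ^ 10` with triples of constants. -/
def cubicCodes : List (FieldCode × ℕ × ℕ × ℕ) :=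
  [(⟨2, 6, 3⟩, 2, 16, 19), (⟨2, 8, 29⟩, 67, 41, 46), (⟨2, 10, 9⟩, 153, 674, 469)]

theorem hasCharacter_and_isNonassoc_of_mem_quadraticCodes :
    ∀ t ∈ quadraticCodes, t.1.HasCharacter 2 ∧ t.1.IsNonassoc ![t.2.1, t.2.2] := by
  decide +kernel

theorem hasCharacter_and_isNonassoc_of_mem_cubicCodes :
    ∀ t ∈ cubicCodes, t.1.HasCharacter 3 ∧ t.1.IsNonassoc ![t.2.1, t.2.2.1, t.2.2.2] := by
  decide +kernel

theorem hasMaxNonassoc_pow_of_mem_quadraticCodes {p k : ℕ} (hp : p.Prime) (hk : k ≠ 0)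
    (h : (p, k) ∈ quadraticCodes.map fun t => (t.1.p, t.1.k)) : HasMaxNonassoc (p ^ k) := by
  obtain ⟨t, ht, heq⟩ := List.mem_map.1 h
  obtain ⟨rfl, rfl⟩ := Prod.mk.inj heq
  obtain ⟨hchar, hconst⟩ := hasCharacter_and_isNonassoc_of_mem_quadraticCodes t ht
  exact hconst.hasMaxNonassoc hchar Nat.prime_two hp hk

theorem hasMaxNonassoc_two_pow_of_mem {k : ℕ} (h : k ∈ [6, 8, 10]) : HasMaxNonassoc (2 ^ k) := by
  obtain ⟨t, ht, rfl⟩ := List.mem_map.1 (show k ∈ cubicCodes.map (·.1.k) from h)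
  obtain ⟨hchar, hconst⟩ := hasCharacter_and_isNonassoc_of_mem_cubicCodes t ht
  obtain ⟨hp, hk⟩ := (by decide : ∀ t ∈ cubicCodes, t.1.p = 2 ∧ t.1.k ≠ 0) t ht
  exact hp ▸ hconst.hasMaxNonassoc hchar Nat.prime_three (hp ▸ Nat.prime_two) hk

theorem hasMaxNonassoc_of_prime_of_le {p : ℕ} (hp : p.Prime) (h13 : 13 ≤ p) (h71 : p ≤ 71) :
    HasMaxNonassoc p := by
  refine pow_one p ▸ hasMaxNonassoc_pow_of_mem_quadraticCodes hp one_ne_zero ?_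
  interval_cases p <;> first | decide | norm_num at hp

open Polynomial

section Stepanov

theorem eq_zero_of_sq_mul_eq_mul_sq {R : Type*} [CommRing R] [IsDomain R]
    [UniqueFactorizationMonoid R] {f u r s : R} (hf : Squarefree f) (hf' : ¬IsUnit f)
    (hu : IsUnit u) (h : r ^ 2 * f = u * s ^ 2) : r = 0 ∧ s = 0 := by
  obtain ⟨q, hq, hqf⟩ := WfDvdMonoid.exists_irreducible_factor hf' hf.ne_zero
  have hqp : Prime q := hq.prime
  have hqf1 : emultiplicity q f = 1 :=
    le_antisymm (((squarefree_iff_emultiplicity_le_one f).1 hf q).resolve_right hq.not_isUnit)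
      (Order.one_le_iff_pos.2 (emultiplicity_pos_of_dvd hqf))
  have hparity : 2 * emultiplicity q r + 1 = 2 * emultiplicity q s := by
    have := congrArg (emultiplicity q) h
    rwa [emultiplicity_mul hqp, emultiplicity_mul hqp, emultiplicity_pow hqp,
      emultiplicity_pow hqp, hqf1, emultiplicity_of_isUnit_right hq.not_isUnit hu, zero_add] at this
  have hr : r = 0 := by
    by_contra hr
    have hs : s ≠ 0 := by
      rintro rfl
      simp [hr, hf.ne_zero] at h
    have hfin_r := FiniteMultiplicity.of_not_isUnit hq.not_isUnit hr
    have hfin_s := FiniteMultiplicity.of_not_isUnit hq.not_isUnit hs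
    rw [hfin_r.emultiplicity_eq_multiplicity, hfin_s.emultiplicity_eq_multiplicity] at hparity
    norm_cast at hparity
    omega
  refine ⟨hr, ?_⟩
  simpa [hr, hu.ne_zero] using h.symm

theorem eq_zero_of_sum_mul_X_pow_eq_zero {R : Type*} [CommRing R] [IsDomain R] {p J : ℕ}
    {u : Fin J → R[X]} (hu : ∀ j, X ^ p ∣ u j → u j = 0)
    (h : ∑ j, u j * X ^ (j * p : ℕ) = 0) (j : Fin J) : u j = 0 := by
  induction J with
  | zero => exact j.elim0
  | succ J ih =>
    have hsplit : u 0 + X ^ p * ∑ j : Fin J, u j.succ * X ^ (j * p : ℕ) = 0 := by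
      rw [← h, Fin.sum_univ_succ, Finset.mul_sum]
      congr 1
      · simp
      · exact Finset.sum_congr rfl fun j _ => by rw [Fin.val_succ]; ring
    have h0 : u 0 = 0 := hu 0 ((dvd_add_left (dvd_mul_right _ _)).1 (hsplit ▸ dvd_zero _))
    rw [h0, zero_add] at hsplit
    refine Fin.cases h0 (fun j => ih (fun j => hu j.succ) ?_ j) j
    exact (mul_eq_zero.1 hsplit).resolve_left (pow_ne_zero _ X_ne_zero)

theorem mem_degreeLT_succ {R : Type*} [CommRing R] {d : ℕ} {u : R[X]} :
    u ∈ degreeLT R (d + 1) ↔ u.natDegree ≤ d := by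
  rw [degreeLT_succ_eq_degreeLE, mem_degreeLE, natDegree_le_iff_degree_le]

theorem exists_ne_zero_forall_eq_zero_of_sum_lt_finrank {F V : Type*} [Field F] [AddCommGroup V]
    [Module F V] [FiniteDimensional F V] {l : ℕ} {b : Fin l → ℕ} (T : Fin l → V →ₗ[F] F[X])
    (hT : ∀ k v, T k v ∈ degreeLT F (b k)) (h : ∑ k, b k < Module.finrank F V) :
    ∃ v ≠ 0, ∀ k, T k v = 0 := by
  have : ∀ k, Module.Finite F (degreeLT F (b k)) := fun k =>
    Module.Finite.equiv (degreeLTEquiv F (b k)).symm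
  let T' : V →ₗ[F] ∀ k, degreeLT F (b k) := LinearMap.pi fun k => (T k).codRestrict _ (hT k)
  have hker : T'.ker ≠ ⊥ := T'.ker_ne_bot_of_finrank_lt <| by
    simpa [Module.finrank_pi_fintype, (degreeLTEquiv F _).finrank_eq] using h
  obtain ⟨v, hv, hv0⟩ := (Submodule.ne_bot_iff _).1 hker
  exact ⟨v, hv0, fun k => congrArg Subtype.val (congrFun (LinearMap.mem_ker.1 hv) k)⟩

section DerivCofactor

variable {R : Type*} [CommRing R]

/-- The differential operator `A` determined by `D^k (f ^ n * r) = f ^ (n - k) * A r`. -/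
noncomputable def derivCofactor (f : R[X]) (n : ℕ) : ℕ → (R[X] →ₗ[R] R[X])
  | 0 => LinearMap.id
  | k + 1 => LinearMap.mulLeft R f ∘ₗ derivative ∘ₗ derivCofactor f n k +
      ((n : R) - k) • LinearMap.mulLeft R (derivative f) ∘ₗ derivCofactor f n k

theorem derivCofactor_succ (f : R[X]) (n k : ℕ) (r : R[X]) :
    derivCofactor f n (k + 1) r = f * derivative (derivCofactor f n k r) +
      C ((n : R) - k) * (derivative f * derivCofactor f n k r) := by
  simp [derivCofactor, smul_eq_C_mul]

theorem natDegree_derivCofactor_le {f : R[X]} (hf : 1 ≤ f.natDegree) (n k : ℕ) (r : R[X]) :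
    (derivCofactor f n k r).natDegree ≤ r.natDegree + k * (f.natDegree - 1) := by
  induction k with
  | zero => simp [derivCofactor]
  | succ k ih =>
    rw [derivCofactor_succ, add_mul, one_mul]
    refine (natDegree_add_le _ _).trans (max_le ?_ ?_)
    · by_cases h0 : (derivCofactor f n k r).natDegree = 0
      · simp [derivative_of_natDegree_zero h0]
      · refine natDegree_mul_le.trans ?_
        have := natDegree_derivative_le (derivCofactor f n k r)
        omega
    · refine (natDegree_C_mul_le _ _).trans (natDegree_mul_le.trans ?_)
      have := natDegree_derivative_le f
      omega

theorem iterate_derivative_pow_mul_mul_X_pow (p : ℕ) [CharP R p] (f r : R[X]) {n k : ℕ}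
    (hk : k ≤ n) (j : ℕ) : derivative^[k] (f ^ n * r * X ^ (j * p)) =
      f ^ (n - k) * derivCofactor f n k r * X ^ (j * p) := by
  induction k with
  | zero => simp [derivCofactor]
  | succ k ih =>
    have hX : derivative ((X : R[X]) ^ (j * p)) = 0 := by
      rw [derivative_X_pow]
      simp
    obtain ⟨a, ha⟩ : ∃ a, n = a + k + 1 := ⟨n - (k + 1), by omega⟩
    have ha1 : n - k = a + 1 := by omega
    have ha2 : n - (k + 1) = a := by omega
    rw [Function.iterate_succ_apply', ih (by omega), derivCofactor_succ, derivative_mul,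
      derivative_mul, hX, ha1, ha2, derivative_pow_succ, ha]
    push_cast
    rw [show (a + k + 1 - k : R) = a + 1 by ring]
    ring

end DerivCofactor

theorem mul_card_le_natDegree_of_le_rootMultiplicity {R : Type*} [CommRing R] [IsDomain R]
    {h : R[X]} {S : Finset R} {l : ℕ} (hS : ∀ x ∈ S, l ≤ h.rootMultiplicity x) :
    l * S.card ≤ h.natDegree := by
  classical
  have hle : l • S.val ≤ h.roots := by
    refine Multiset.le_iff_count.2 fun x => ?_
    rw [Multiset.count_nsmul, count_roots]
    by_cases hx : x ∈ S
    · simpa [Multiset.count_eq_one_of_mem S.nodup hx] using hS x hx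
    · simp [Multiset.count_eq_zero_of_notMem (s := S.val) hx]
  simpa using (Multiset.card_le_card hle).trans (card_roots' h)

variable {p : ℕ} [Fact p.Prime] {f : (ZMod p)[X]}

theorem X_pow_dvd_pow_sub_C_coeff_zero (f : (ZMod p)[X]) : X ^ p ∣ f ^ p - C (f.coeff 0) := by
  have h := pow_dvd_pow_of_dvd (X_dvd_sub_C (p := f)) p
  rwa [sub_pow_char, ← C_pow, ZMod.pow_card] at h

theorem eq_zero_of_X_pow_dvd_add_pow_mul (hp2 : p ≠ 2) (hf : 1 ≤ f.natDegree) (hsq : Squarefree f)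
    (h0 : f.coeff 0 ≠ 0) {r s : (ZMod p)[X]} (hr : 2 * r.natDegree + f.natDegree < p)
    (hs : 2 * s.natDegree < p) (h : X ^ p ∣ r + f ^ (p / 2) * s) : r = 0 ∧ s = 0 := by
  have hodd : p = 2 * (p / 2) + 1 := by
    have := (Fact.out : p.Prime).eq_two_or_odd
    omega
  have hfp : f ^ p = (f ^ (p / 2)) ^ 2 * f := by
    rw [← pow_mul, ← pow_succ, mul_comm, ← hodd]
  have hdvd : X ^ p ∣ r ^ 2 * f - C (f.coeff 0) * s ^ 2 := by
    have : r ^ 2 * f - C (f.coeff 0) * s ^ 2 = (r + f ^ (p / 2) * s) *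
        ((r - f ^ (p / 2) * s) * f) + (f ^ p - C (f.coeff 0)) * s ^ 2 := by
      rw [hfp]
      ring
    rw [this]
    exact dvd_add (h.mul_right _) ((X_pow_dvd_pow_sub_C_coeff_zero f).mul_right _)
  have hdeg : (r ^ 2 * f - C (f.coeff 0) * s ^ 2).natDegree < p := by
    have := natDegree_pow_le (p := r) (n := 2)
    have := natDegree_pow_le (p := s) (n := 2)
    have := natDegree_mul_le (p := r ^ 2) (q := f)
    have := natDegree_C_mul_le (f.coeff 0) (s ^ 2)
    exact (natDegree_sub_le _ _).trans_lt (max_lt (by omega) (by omega))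
  refine eq_zero_of_sq_mul_eq_mul_sq hsq (fun hu => ?_) (isUnit_C.2 h0.isUnit)
    (sub_eq_zero.1 (eq_zero_of_dvd_of_natDegree_lt hdvd (by simpa using hdeg)))
  have := natDegree_eq_zero_of_isUnit hu
  omega

/-- Stepanov's auxiliary polynomial `f ^ l * ∑ j, (r j + f ^ (p / 2) * s j) * X ^ (j * p)`. On the
points where `f ^ (p / 2)` is constant it can be made to vanish to order `l`. -/
noncomputable def stepanovPoly {J : ℕ} (f : (ZMod p)[X]) (l : ℕ) (r s : Fin J → (ZMod p)[X]) :
    (ZMod p)[X] :=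
  ∑ j, (f ^ l * r j * X ^ (j * p : ℕ) + f ^ (l + p / 2) * s j * X ^ (j * p : ℕ))

variable {l d J : ℕ} {r s : Fin J → (ZMod p)[X]}

theorem eq_zero_of_stepanovPoly_eq_zero (hp2 : p ≠ 2) (hf : 1 ≤ f.natDegree) (hsq : Squarefree f)
    (h0 : f.coeff 0 ≠ 0) (hd : 2 * d + f.natDegree < p) (hr : ∀ j, (r j).natDegree ≤ d)
    (hs : ∀ j, (s j).natDegree ≤ d) (h : stepanovPoly f l r s = 0) : r = 0 ∧ s = 0 := by
  have hrs (j : Fin J) (hdvd : X ^ p ∣ r j + f ^ (p / 2) * s j) : r j = 0 ∧ s j = 0 := by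
    have hrj := hr j
    have hsj := hs j
    exact eq_zero_of_X_pow_dvd_add_pow_mul hp2 hf hsq h0 (by omega) (by omega) hdvd
  have hfactor : stepanovPoly f l r s =
      f ^ l * ∑ j, (r j + f ^ (p / 2) * s j) * X ^ (j * p : ℕ) := by
    rw [stepanovPoly, Finset.mul_sum]
    exact Finset.sum_congr rfl fun j _ => by ring
  rw [hfactor] at h
  have hzero := eq_zero_of_sum_mul_X_pow_eq_zero
    (fun j hdvd => by rw [(hrs j hdvd).1, (hrs j hdvd).2, mul_zero, add_zero])
    ((mul_eq_zero.1 h).resolve_left (pow_ne_zero _ hsq.ne_zero))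
  have hrs0 (j : Fin J) : r j = 0 ∧ s j = 0 := hrs j (hzero j ▸ dvd_zero _)
  exact ⟨funext fun j => (hrs0 j).1, funext fun j => (hrs0 j).2⟩

theorem natDegree_stepanovPoly_le (hr : ∀ j, (r j).natDegree ≤ d)
    (hs : ∀ j, (s j).natDegree ≤ d) :
    (stepanovPoly f l r s).natDegree ≤ (l + p / 2) * f.natDegree + d + (J - 1) * p := by
  refine natDegree_sum_le_of_forall_le _ _ fun j _ => ?_
  have hterm {n : ℕ} {u : (ZMod p)[X]} (hn : n ≤ l + p / 2) (hu : u.natDegree ≤ d) :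
      (f ^ n * u * X ^ (j * p : ℕ)).natDegree ≤
        (l + p / 2) * f.natDegree + d + (J - 1) * p := by
    refine natDegree_mul_le.trans (add_le_add (natDegree_mul_le.trans (add_le_add ?_ hu)) ?_)
    · exact natDegree_pow_le.trans (Nat.mul_le_mul_right _ hn)
    · rw [natDegree_X_pow]
      exact Nat.mul_le_mul_right _ (by omega)
  exact (natDegree_add_le _ _).trans
    (max_le (hterm (Nat.le_add_right _ _) (hr j)) (hterm le_rfl (hs j)))

theorem le_rootMultiplicity_stepanovPoly (hl : l ≤ p) (hne : stepanovPoly f l r s ≠ 0)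
    {ε x : ZMod p} (hx : f.eval x ^ (p / 2) = ε)
    (h : ∀ k < l, ∑ j : Fin J, (derivCofactor f l k (r j) +
      C ε * derivCofactor f (l + p / 2) k (s j)) * X ^ (j : ℕ) = 0) :
    l ≤ (stepanovPoly f l r s).rootMultiplicity x := by
  rcases l.eq_zero_or_pos with rfl | hl0
  · exact Nat.zero_le _
  refine Nat.le_of_pred_lt
    (lt_rootMultiplicity_of_isRoot_iterate_derivative_of_mem_nonZeroDivisors hne
      (fun k hk => ?_) ?_)
  · have hkl : k < l := hk.trans_lt (Nat.pred_lt hl0.ne')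
    have hsum := congrArg (eval x) (h k hkl)
    rw [eval_finsetSum, eval_zero] at hsum
    rw [IsRoot, stepanovPoly, iterate_derivative_sum, eval_finsetSum,
      ← mul_zero (f.eval x ^ (l - k)), ← hsum, Finset.mul_sum]
    refine Finset.sum_congr rfl fun j _ => ?_
    rw [iterate_map_add, iterate_derivative_pow_mul_mul_X_pow p f _ hkl.le,
      iterate_derivative_pow_mul_mul_X_pow p f _ (hkl.le.trans (Nat.le_add_right _ _)),
      Nat.sub_add_comm hkl.le]
    have hfrob : x ^ (j * p : ℕ) = x ^ (j : ℕ) := by rw [pow_mul, ZMod.pow_card]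
    simp only [eval_add, eval_mul, eval_pow, eval_X, eval_C, hfrob, pow_add, hx]
    ring
  · rw [mem_nonZeroDivisors_iff_ne_zero, Ne, ZMod.natCast_eq_zero_iff,
      (Fact.out : p.Prime).dvd_factorial, Nat.pred_eq_sub_one]
    omega

theorem sum_derivCofactor_mul_X_pow_mem_degreeLT {R : Type*} [CommRing R] {f : R[X]}
    (hf : 1 ≤ f.natDegree) (n₁ n₂ k : ℕ) {d J : ℕ} (ε : R) {r s : Fin J → R[X]}
    (hr : ∀ j, (r j).natDegree ≤ d) (hs : ∀ j, (s j).natDegree ≤ d) :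
    ∑ j : Fin J, (derivCofactor f n₁ k (r j) + C ε * derivCofactor f n₂ k (s j)) * X ^ (j : ℕ) ∈
      degreeLT R (d + k * (f.natDegree - 1) + J) := by
  refine Submodule.sum_mem _ fun j _ => ?_
  obtain ⟨J, rfl⟩ : ∃ J', J = J' + 1 := ⟨J - 1, by have := j.2; omega⟩
  have hA (n : ℕ) {u : R[X]} (hu : u.natDegree ≤ d) :
      (derivCofactor f n k u).natDegree ≤ d + k * (f.natDegree - 1) :=
    (natDegree_derivCofactor_le hf n k u).trans (Nat.add_le_add_right hu _)
  rw [← add_assoc, mem_degreeLT_succ]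
  refine natDegree_mul_le.trans (add_le_add ?_ ((natDegree_X_pow_le _).trans (by omega)))
  exact (natDegree_add_le _ _).trans
    (max_le (hA n₁ (hr j)) ((natDegree_C_mul_le _ _).trans (hA n₂ (hs j))))

theorem exists_sum_derivCofactor_mul_X_pow_eq_zero {F : Type*} [Field F] {f : F[X]}
    (hf : 1 ≤ f.natDegree) (n₁ n₂ l d J : ℕ) (ε : F)
    (hcount : ∑ k ∈ Finset.range l, (d + k * (f.natDegree - 1) + J) < 2 * J * (d + 1)) :
    ∃ r s : Fin J → F[X], (∀ j, (r j).natDegree ≤ d) ∧ (∀ j, (s j).natDegree ≤ d) ∧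
      ¬(r = 0 ∧ s = 0) ∧ ∀ k < l, ∑ j : Fin J, (derivCofactor f n₁ k (r j) +
        C ε * derivCofactor f n₂ k (s j)) * X ^ (j : ℕ) = 0 := by
  have : Module.Finite F (degreeLT F (d + 1)) := Module.Finite.equiv (degreeLTEquiv F _).symm
  let V := Fin J → degreeLT F (d + 1)
  let coord (j : Fin J) : V →ₗ[F] F[X] := (degreeLT F (d + 1)).subtype ∘ₗ LinearMap.proj j
  let T (k : Fin l) : V × V →ₗ[F] F[X] := ∑ j : Fin J, LinearMap.mulRight F (X ^ (j : ℕ)) ∘ₗ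
    (derivCofactor f n₁ k ∘ₗ coord j ∘ₗ LinearMap.fst F V V +
      LinearMap.mulLeft F (C ε) ∘ₗ derivCofactor f n₂ k ∘ₗ coord j ∘ₗ LinearMap.snd F V V)
  have hT (k : Fin l) (v : V × V) : T k v = ∑ j : Fin J, (derivCofactor f n₁ k (v.1 j) +
      C ε * derivCofactor f n₂ k (v.2 j)) * X ^ (j : ℕ) := by
    simp only [T, LinearMap.sum_apply]
    rfl
  have hdeg (w : V) (j : Fin J) : (w j : F[X]).natDegree ≤ d := mem_degreeLT_succ.1 (w j).2
  have hfinrank : Module.finrank F (V × V) = 2 * J * (d + 1) := by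
    simp only [V, Module.finrank_prod, Module.finrank_pi_fintype,
      (degreeLTEquiv F _).finrank_eq, Module.finrank_self, Finset.sum_const, Finset.card_univ,
      Fintype.card_fin, smul_eq_mul]
    ring
  obtain ⟨v, hv, hTv⟩ := exists_ne_zero_forall_eq_zero_of_sum_lt_finrank T
    (fun k v => hT k v ▸
      sum_derivCofactor_mul_X_pow_mem_degreeLT hf n₁ n₂ k ε (hdeg v.1) (hdeg v.2))
    (by rwa [hfinrank, ← Finset.sum_range fun k => d + k * (f.natDegree - 1) + J])
  refine ⟨fun j => v.1 j, fun j => v.2 j, hdeg v.1, hdeg v.2, fun ⟨h1, h2⟩ => hv ?_,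
    fun k hk => (hT ⟨k, hk⟩ v).symm.trans (hTv ⟨k, hk⟩)⟩
  exact Prod.ext (funext fun j => Subtype.ext (congrFun h1 j))
    (funext fun j => Subtype.ext (congrFun h2 j))

theorem mul_card_le_of_eval_pow_eq (hp2 : p ≠ 2) (hf : 1 ≤ f.natDegree) (hsq : Squarefree f)
    (h0 : f.coeff 0 ≠ 0) (hl : l ≤ p) (hd : 2 * d + f.natDegree < p)
    (hcount : ∑ k ∈ Finset.range l, (d + k * (f.natDegree - 1) + J) < 2 * J * (d + 1))
    {ε : ZMod p} {S : Finset (ZMod p)} (hS : ∀ x ∈ S, f.eval x ^ (p / 2) = ε) :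
    l * S.card ≤ (l + p / 2) * f.natDegree + d + (J - 1) * p := by
  obtain ⟨r, s, hr, hs, hrs, hvanish⟩ :=
    exists_sum_derivCofactor_mul_X_pow_eq_zero hf l (l + p / 2) l d J ε hcount
  have hne : stepanovPoly f l r s ≠ 0 := fun h =>
    hrs (eq_zero_of_stepanovPoly_eq_zero hp2 hf hsq h0 hd hr hs h)
  exact (mul_card_le_natDegree_of_le_rootMultiplicity fun x hx =>
    le_rootMultiplicity_stepanovPoly hl hne (hS x hx) hvanish).trans
      (natDegree_stepanovPoly_le hr hs)

theorem sum_range_add_mul_lt_two_mul {l m d J p : ℕ} (hl : l * l ≤ p) (hm : 1 ≤ m)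
    (hp : m ^ 2 + m + 2 * l + 1 ≤ p) (hd : p ≤ 2 * (d + 1) + m) (hJ : l + m + 1 ≤ 2 * J)
    (hJ' : 2 * J ≤ l + m + 2) :
    ∑ k ∈ Finset.range l, (d + k * (m - 1) + J) < 2 * J * (d + 1) := by
  have hsum : ∑ k ∈ Finset.range l, (d + k * (m - 1) + J) =
      l * (d + J) + (∑ k ∈ Finset.range l, k) * (m - 1) := by
    simp only [Finset.sum_mul, Finset.sum_add_distrib, Finset.sum_const, Finset.card_range,
      smul_eq_mul]
    ring
  have htriangle : 2 * (∑ k ∈ Finset.range l, k) + l = l * l := by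
    rw [mul_comm, Finset.sum_range_id_mul_two, ← Nat.mul_succ]
    rcases l with _ | l <;> rfl
  rw [hsum]
  generalize ∑ k ∈ Finset.range l, k = s at htriangle
  obtain ⟨m, rfl⟩ : ∃ m', m = m' + 1 := ⟨m - 1, by omega⟩
  rw [Nat.add_sub_cancel]
  obtain ⟨δ, hδ⟩ : ∃ δ, 2 * J = l + m + 1 + δ := ⟨2 * J - (l + m + 1), by omega⟩
  zify at *
  have hm_mul : (m + 1) * (l * l) ≤ ((m + 1) * p : ℤ) := by gcongr
  have hδ_mul : (m + 1 + δ) * (p - (m + 1)) ≤ ((m + 1 + δ) * (2 * (d + 1)) : ℤ) := by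
    gcongr
    linarith
  have hδ_cases : (δ : ℤ) = 1 ∨ (δ : ℤ) = 2 := by omega
  rcases hδ_cases with h | h <;> rw [h] at hδ hδ_mul <;> nlinarith

theorem two_mul_card_le_of_eval_pow_eq {p : ℕ} [Fact p.Prime] {f : (ZMod p)[X]} (hp2 : p ≠ 2)
    (hf : 1 ≤ f.natDegree) (hsq : Squarefree f) (h0 : f.coeff 0 ≠ 0)
    (hp : f.natDegree ^ 2 + f.natDegree + 2 * p.sqrt + 1 ≤ p) {ε : ZMod p}
    {S : Finset (ZMod p)} (hS : ∀ x ∈ S, f.eval x ^ (p / 2) = ε) :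
    2 * S.card ≤ p + 2 * f.natDegree + (2 * f.natDegree + 1) * (p.sqrt + 2) := by
  have hsqrt_le : p.sqrt * p.sqrt ≤ p := p.sqrt_le
  have hle_sqrt : p ≤ p.sqrt * p.sqrt + p.sqrt + p.sqrt := p.sqrt_le_add
  have hsqrt_pos : 0 < p.sqrt := Nat.sqrt_pos.2 (Fact.out : p.Prime).pos
  set l := p.sqrt
  set m := f.natDegree
  have hm : m + 3 ≤ p := by nlinarith
  obtain ⟨d, hd, hd'⟩ : ∃ d, 2 * d + m < p ∧ p ≤ 2 * (d + 1) + m :=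
    ⟨(p - m - 1) / 2, by omega, by omega⟩
  obtain ⟨J, hJ, hJ'⟩ : ∃ J, l + m + 1 ≤ 2 * (J + 1) ∧ 2 * (J + 1) ≤ l + m + 2 :=
    ⟨(l + m) / 2, by omega, by omega⟩
  have hcard : l * S.card ≤ (l + p / 2) * m + d + J * p :=
    mul_card_le_of_eval_pow_eq hp2 hf hsq h0 (by nlinarith) hd
      (sum_range_add_mul_lt_two_mul hsqrt_le hf hp hd' hJ hJ') hS
  have hhalf : 2 * (p / 2) * m ≤ p * m := Nat.mul_le_mul_right _ (by omega)
  have hJp : 2 * (J + 1) * p ≤ (l + m + 2) * p := Nat.mul_le_mul_right _ hJ'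
  have hmp : (2 * m + 1) * p ≤ (2 * m + 1) * (l * l + l + l) := Nat.mul_le_mul_left _ hle_sqrt
  have hmul : l * (2 * S.card) ≤ l * (p + 2 * m + (2 * m + 1) * (l + 2)) := by nlinarith
  exact Nat.le_of_mul_le_mul_left hmul hsqrt_pos

section CharacterSums

variable {F : Type*} [Field F] [Fintype F] [DecidableEq F]

theorem sum_quadraticChar_eq_card_sub_card (g : F → F) :
    ∑ x, quadraticChar F (g x) =
      (Finset.univ.filter fun x => quadraticChar F (g x) = 1).card -
        (Finset.univ.filter fun x => quadraticChar F (g x) = -1).card := by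
  simp only [Finset.card_filter, Nat.cast_sum, Nat.cast_ite, Nat.cast_one, Nat.cast_zero,
    ← Finset.sum_sub_distrib]
  refine Finset.sum_congr rfl fun x _ => ?_
  rcases quadraticChar_isQuadratic F (g x) with h | h | h <;> rw [h] <;> rfl

theorem card_eq_card_quadraticChar_fibers (g : F → F) :
    Fintype.card F = (Finset.univ.filter fun x => quadraticChar F (g x) = 1).card +
      (Finset.univ.filter fun x => quadraticChar F (g x) = -1).card +
        (Finset.univ.filter fun x => g x = 0).card := by
  simp only [Finset.card_filter, ← Finset.sum_add_distrib, Fintype.card_eq_sum_ones]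
  refine Finset.sum_congr rfl fun x _ => ?_
  rcases eq_or_ne (g x) 0 with h | h
  · simp [h]
  · rcases quadraticChar_dichotomy h with hχ | hχ <;> rw [hχ, if_neg h] <;> rfl

theorem card_filter_eval_eq_zero_le_natDegree {f : F[X]} (hf : f ≠ 0) :
    (Finset.univ.filter fun x => f.eval x = 0).card ≤ f.natDegree := by
  have : (Finset.univ.filter fun x => f.eval x = 0) = f.roots.toFinset := by
    ext x
    simp [hf]
  exact this ▸ (Multiset.toFinset_card_le _).trans (card_roots' f)

end CharacterSums

theorem abs_sum_quadraticChar_eval_le_of_coeff_zero_ne_zero {p : ℕ} [Fact p.Prime]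
    {f : (ZMod p)[X]} (hp2 : p ≠ 2) (hf : 1 ≤ f.natDegree) (hsq : Squarefree f)
    (h0 : f.coeff 0 ≠ 0) (hp : f.natDegree ^ 2 + f.natDegree + 2 * p.sqrt + 1 ≤ p) :
    |∑ x, quadraticChar (ZMod p) (f.eval x)| ≤
      (3 * f.natDegree + (2 * f.natDegree + 1) * (p.sqrt + 2) : ℕ) := by
  have hfiber (ε : ℤ) :
      2 * (Finset.univ.filter fun x => quadraticChar (ZMod p) (f.eval x) = ε).card ≤
        p + 2 * f.natDegree + (2 * f.natDegree + 1) * (p.sqrt + 2) := by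
    refine two_mul_card_le_of_eval_pow_eq hp2 hf hsq h0 hp (ε := ε) fun x hx => ?_
    have hpow := quadraticChar_eq_pow_of_char_ne_two' (F := ZMod p)
      (by rwa [ZMod.ringChar_zmod_n]) (f.eval x)
    rw [ZMod.card] at hpow
    rw [← hpow, (Finset.mem_filter.1 hx).2]
  have hcard := card_eq_card_quadraticChar_fibers fun x => f.eval x
  have hroots := card_filter_eval_eq_zero_le_natDegree hsq.ne_zero
  have hpos := hfiber 1
  have hneg := hfiber (-1)
  rw [ZMod.card] at hcard
  rw [sum_quadraticChar_eq_card_sub_card fun x => f.eval x, abs_le]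
  omega

theorem squarefree_map_mulEquiv {M N : Type*} [Monoid M] [Monoid N] (φ : M ≃* N) {x : M}
    (hx : Squarefree x) : Squarefree (φ x) := by
  intro u hu
  have hdvd : φ.symm u * φ.symm u ∣ x := by
    simpa using map_dvd φ.symm hu
  simpa using hx _ hdvd

theorem squarefree_taylor {R : Type*} [CommRing R] {f : R[X]} (hf : Squarefree f) (c : R) :
    Squarefree (taylor c f) :=
  squarefree_map_mulEquiv (taylorEquiv c).toMulEquiv hf

theorem abs_sum_quadraticChar_eval_le {p : ℕ} [Fact p.Prime] {f : (ZMod p)[X]} (hp2 : p ≠ 2)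
    (hf : 1 ≤ f.natDegree) (hsq : Squarefree f)
    (hp : f.natDegree ^ 2 + f.natDegree + 2 * p.sqrt + 1 ≤ p) :
    |∑ x, quadraticChar (ZMod p) (f.eval x)| ≤
      (3 * f.natDegree + (2 * f.natDegree + 1) * (p.sqrt + 2) : ℕ) := by
  obtain ⟨c, hc⟩ : ∃ c, f.eval c ≠ 0 := by
    by_contra! h
    have := card_filter_eval_eq_zero_le_natDegree hsq.ne_zero
    simp only [h, Finset.filter_true, Finset.card_univ, ZMod.card] at this
    omega
  have hbound := abs_sum_quadraticChar_eval_le_of_coeff_zero_ne_zero hp2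
    (by rwa [natDegree_taylor]) (squarefree_taylor hsq c) (by rwa [taylor_coeff_zero])
    (by rwa [natDegree_taylor])
  simp only [taylor_eval, natDegree_taylor] at hbound
  have hshift : ∑ x, quadraticChar (ZMod p) (f.eval (x + c)) =
      ∑ x, quadraticChar (ZMod p) (f.eval x) :=
    Fintype.sum_equiv (Equiv.addRight c) _ _ fun _ => rfl
  rwa [hshift] at hbound

end Stepanov

section SignPatterns

theorem sum_finset_sum_mul_two {ι : Type*} [Fintype ι] (d : ι → ℕ) :
    (∑ S : Finset ι, ∑ i ∈ S, d i) * 2 = 2 ^ Fintype.card ι * ∑ i, d i := by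
  classical
  have hcompl : ∑ S : Finset ι, ∑ i ∈ Sᶜ, d i = ∑ S : Finset ι, ∑ i ∈ S, d i :=
    compl_involutive.bijective.sum_comp fun S : Finset ι => ∑ i ∈ S, d i
  calc (∑ S : Finset ι, ∑ i ∈ S, d i) * 2
      = ∑ S : Finset ι, (∑ i ∈ S, d i + ∑ i ∈ Sᶜ, d i) := by
        rw [Finset.sum_add_distrib, hcompl, mul_two]
    _ = 2 ^ Fintype.card ι * ∑ i, d i := by
        simp [Finset.sum_add_sum_compl, Fintype.card_finset]

variable {ι : Type*} [Fintype ι]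

section Field

variable {F : Type*} [Field F] [Fintype F] [DecidableEq F] {f : ι → F[X]} {ε : ι → ℤ}

theorem sum_prod_one_add_mul_quadraticChar (f : ι → F[X]) (ε : ι → ℤ) :
    ∑ t, ∏ i, (1 + ε i * quadraticChar F ((f i).eval t)) =
      ∑ S : Finset ι, (∏ i ∈ S, ε i) * ∑ t, quadraticChar F ((∏ i ∈ S, f i).eval t) := by
  classical
  simp_rw [Finset.prod_one_add, Finset.powerset_univ]
  rw [Finset.sum_comm]
  refine Finset.sum_congr rfl fun S _ => ?_
  simp_rw [Finset.mul_sum, Finset.prod_mul_distrib, eval_prod, map_prod]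

theorem one_add_mul_quadraticChar_nonneg_and_le_two {ε : ℤ} (hε : ε = 1 ∨ ε = -1) (x : F) :
    0 ≤ 1 + ε * quadraticChar F x ∧ 1 + ε * quadraticChar F x ≤ 2 := by
  rcases hε with rfl | rfl <;>
  rcases quadraticChar_isQuadratic F x with h | h | h <;> rw [h] <;> decide

theorem sum_prod_one_add_mul_quadraticChar_le (hf : ∀ i, f i ≠ 0)
    (hε : ∀ i, ε i = 1 ∨ ε i = -1) (hne : ∀ t, ∃ i, quadraticChar F ((f i).eval t) ≠ ε i) :
    ∑ t, ∏ i, (1 + ε i * quadraticChar F ((f i).eval t)) ≤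
      (2 ^ Fintype.card ι * ∑ i, (f i).natDegree : ℕ) := by
  have hprod : ∏ i, f i ≠ 0 := Finset.prod_ne_zero_iff.2 fun i _ => hf i
  have hzero (t : F) (ht : (∏ i, f i).eval t ≠ 0) :
      ∏ i, (1 + ε i * quadraticChar F ((f i).eval t)) = 0 := by
    obtain ⟨i, hi⟩ := hne t
    rw [eval_prod, Finset.prod_ne_zero_iff] at ht
    refine Finset.prod_eq_zero (Finset.mem_univ i) ?_
    rcases quadraticChar_dichotomy (ht i (Finset.mem_univ i)) with h | h <;>
    rcases hε i with h' | h' <;> rw [h, h'] at hi ⊢ <;> simp at hi ⊢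
  have hle (t : F) : ∏ i, (1 + ε i * quadraticChar F ((f i).eval t)) ≤ 2 ^ Fintype.card ι := by
    have hbounds i := one_add_mul_quadraticChar_nonneg_and_le_two (hε i) ((f i).eval t)
    exact (Finset.prod_le_prod (fun i _ => (hbounds i).1) fun i _ => (hbounds i).2).trans_eq
      (by rw [Finset.prod_const, Finset.card_univ])
  calc ∑ t, ∏ i, (1 + ε i * quadraticChar F ((f i).eval t))
      = ∑ t with (∏ i, f i).eval t = 0, ∏ i, (1 + ε i * quadraticChar F ((f i).eval t)) :=
        (Finset.sum_filter_of_ne fun t _ ht => not_not.1 fun h => ht (hzero t h)).symm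
    _ ≤ (Finset.univ.filter fun t => (∏ i, f i).eval t = 0).card • 2 ^ Fintype.card ι :=
        Finset.sum_le_card_nsmul _ _ _ fun t _ => hle t
    _ ≤ (2 ^ Fintype.card ι * ∑ i, (f i).natDegree : ℕ) := by
        have hroots := card_filter_eval_eq_zero_le_natDegree hprod
        rw [natDegree_prod _ _ fun i _ => hf i] at hroots
        rw [nsmul_eq_mul, mul_comm]
        exact_mod_cast Nat.mul_le_mul_left _ hroots

end Field

variable {p : ℕ} [Fact p.Prime] {f : ι → (ZMod p)[X]} {ε : ι → ℤ}

theorem neg_le_prod_mul_sum_quadraticChar_eval (hp2 : p ≠ 2) (hf : ∀ i, 1 ≤ (f i).natDegree)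
    (hsq : Squarefree (∏ i, f i)) (hε : ∀ i, ε i = 1 ∨ ε i = -1)
    (hp : (∑ i, (f i).natDegree) ^ 2 + ∑ i, (f i).natDegree + 2 * p.sqrt + 1 ≤ p)
    {S : Finset ι} (hS : S.Nonempty) :
    -((3 * ∑ i ∈ S, (f i).natDegree + (2 * ∑ i ∈ S, (f i).natDegree + 1) * (p.sqrt + 2) : ℕ) : ℤ) ≤
      (∏ i ∈ S, ε i) * ∑ t, quadraticChar (ZMod p) ((∏ i ∈ S, f i).eval t) := by
  have hdeg : (∏ i ∈ S, f i).natDegree = ∑ i ∈ S, (f i).natDegree :=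
    natDegree_prod _ _ fun i _ => ne_zero_of_natDegree_gt (hf i)
  have hdeg_le : ∑ i ∈ S, (f i).natDegree ≤ ∑ i, (f i).natDegree :=
    Finset.sum_le_sum_of_subset (Finset.subset_univ S)
  obtain ⟨i, hi⟩ := hS
  have hdeg_pos : 1 ≤ ∑ i ∈ S, (f i).natDegree :=
    (hf i).trans (Finset.single_le_sum (f := fun i => (f i).natDegree) (fun _ _ => zero_le) hi)
  have hbound := abs_sum_quadraticChar_eval_le hp2 (hdeg ▸ hdeg_pos)
    (hsq.squarefree_of_dvd (Finset.prod_dvd_prod_of_subset _ _ _ (Finset.subset_univ S)))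
    (by rw [hdeg]; exact le_trans (by gcongr) hp)
  have hsign : |∏ i ∈ S, ε i| = 1 := by
    rw [Finset.abs_prod]
    exact Finset.prod_eq_one fun i _ => by rcases hε i with h | h <;> simp [h]
  rw [hdeg, ← one_mul |_|, ← hsign, ← abs_mul] at hbound
  exact (abs_le.1 hbound).1

theorem le_sum_prod_one_add_mul_quadraticChar (hp2 : p ≠ 2) (hf : ∀ i, 1 ≤ (f i).natDegree)
    (hsq : Squarefree (∏ i, f i)) (hε : ∀ i, ε i = 1 ∨ ε i = -1)
    (hp : (∑ i, (f i).natDegree) ^ 2 + ∑ i, (f i).natDegree + 2 * p.sqrt + 1 ≤ p) :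
    2 * (p : ℤ) - (2 ^ Fintype.card ι * (3 * ∑ i, (f i).natDegree +
      2 * (∑ i, (f i).natDegree + 1) * (p.sqrt + 2)) : ℕ) ≤
        2 * ∑ t, ∏ i, (1 + ε i * quadraticChar (ZMod p) ((f i).eval t)) := by
  classical
  let B (S : Finset ι) : ℕ :=
    3 * ∑ i ∈ S, (f i).natDegree + (2 * ∑ i ∈ S, (f i).natDegree + 1) * (p.sqrt + 2)
  have hterm (S : Finset ι) : (if S = ∅ then (p : ℤ) else 0) - B S ≤
      (∏ i ∈ S, ε i) * ∑ t, quadraticChar (ZMod p) ((∏ i ∈ S, f i).eval t) := by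
    rcases S.eq_empty_or_nonempty with rfl | hS
    · simp [ZMod.card]
    · rw [if_neg hS.ne_empty, zero_sub]
      exact neg_le_prod_mul_sum_quadraticChar_eval hp2 hf hsq hε hp hS
  have hB : 2 * ∑ S, B S = 2 ^ Fintype.card ι * (3 * ∑ i, (f i).natDegree +
      2 * (∑ i, (f i).natDegree + 1) * (p.sqrt + 2)) := by
    have hdouble := sum_finset_sum_mul_two fun i => (f i).natDegree
    simp only [B, Finset.sum_add_distrib, ← Finset.mul_sum, ← Finset.sum_mul, Finset.sum_const,
      Finset.card_univ, Fintype.card_finset, smul_eq_mul, mul_one]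
    linear_combination (3 + 2 * (p.sqrt + 2)) * hdouble
  have hsum := Finset.sum_le_sum fun S (_ : S ∈ Finset.univ) => hterm S
  rw [← sum_prod_one_add_mul_quadraticChar, Finset.sum_sub_distrib, Finset.sum_ite_eq',
    if_pos (Finset.mem_univ _), ← Nat.cast_sum] at hsum
  rw [← hB]
  push_cast at hsum ⊢
  linarith

theorem sq_add_add_two_mul_sqrt_lt {D p : ℕ} (hp : 5 * D + 2 * (D + 1) * (p.sqrt + 2) < p) :
    D ^ 2 + D + 2 * p.sqrt + 1 < p := by
  have hD : D ≤ p.sqrt := by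
    by_contra! h
    have := p.sqrt_le_add
    nlinarith
  nlinarith

theorem exists_forall_quadraticChar_eval_eq (hp2 : p ≠ 2) (hf : ∀ i, 1 ≤ (f i).natDegree)
    (hsq : Squarefree (∏ i, f i)) (hε : ∀ i, ε i = 1 ∨ ε i = -1)
    (hp : 2 ^ Fintype.card ι * (5 * ∑ i, (f i).natDegree +
      2 * (∑ i, (f i).natDegree + 1) * (p.sqrt + 2)) < 2 * p) :
    ∃ t : ZMod p, ∀ i, quadraticChar (ZMod p) ((f i).eval t) = ε i := by
  cases isEmpty_or_nonempty ι
  · exact ⟨0, isEmptyElim⟩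
  by_contra! hne
  have hp_sqrt := sq_add_add_two_mul_sqrt_lt <| lt_of_mul_lt_mul_left'
    ((Nat.mul_le_mul_right _ (Nat.pow_le_pow_right two_pos Fintype.card_pos)).trans_lt hp)
  have hlower := le_sum_prod_one_add_mul_quadraticChar hp2 hf hsq hε hp_sqrt.le
  have hupper := sum_prod_one_add_mul_quadraticChar_le
    (fun i => ne_zero_of_natDegree_gt (hf i)) hε hne
  zify at hp
  push_cast at hlower hupper
  linarith

end SignPatterns

section QuadraticFamilies

variable {F : Type*} [Field F] [Fintype F] [DecidableEq F]

theorem quadraticChar_formD_add_one {t : F} (ht : quadraticChar F t = -1)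
    (ht_add : quadraticChar F (t + 1) = -1) (ht_sub : quadraticChar F (t - 1) = -1)
    (h₁ : quadraticChar F (t ^ 2 - t - 1) = -1) (h₃ : quadraticChar F (t ^ 2 + t + 1) = 1)
    (j r s : Bool) :
    quadraticChar F (formD 1 (fun b => bif b then t + 1 else t) j r s) =
      boolSign (!j && !r && s) := by
  set c : Bool → F := fun b => bif b then t + 1 else t with hc
  obtain ⟨hfff, hfft, hftf, hftt, htff, htft, httf, httt⟩ :
      formD 1 c false false false = t * (t - 1) ∧
      formD 1 c false false true = t ^ 2 - t - 1 ∧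
      formD 1 c false true false = t ^ 2 ∧
      formD 1 c false true true = (t + 1) * (t - 1) ∧
      formD 1 c true false false = t ^ 2 ∧
      formD 1 c true false true = (t + 1) * (t - 1) ∧
      formD 1 c true true false = t ^ 2 + t + 1 ∧
      formD 1 c true true true = t * (t + 1) := by
    simp only [formD, hc, cond]
    and_intros <;> ring
  cases j <;> cases r <;> cases s <;>
    simp [boolSign, hfff, hfft, hftf, hftt, htff, htft, httf, httt, ht, ht_add, ht_sub, h₁, h₃,
      -quadraticChar_apply]

theorem isNonassocTriple_add_one {t : F} (hneg : quadraticChar F (-1) = -1)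
    (ht : quadraticChar F t = -1) (ht_add : quadraticChar F (t + 1) = -1)
    (ht_sub : quadraticChar F (t - 1) = -1)
    (h₁ : quadraticChar F (t ^ 2 - t - 1) = -1) (h₂ : quadraticChar F (t ^ 3 - t ^ 2 + 1) = -1)
    (h₃ : quadraticChar F (t ^ 2 + t + 1) = 1) (h₄ : quadraticChar F (t ^ 2 - t + 1) = -1) :
    IsNonassocTriple 1 fun b => bif b then t + 1 else t := by
  have hD := quadraticChar_formD_add_one ht ht_add ht_sub h₁ h₃
  set c : Bool → F := fun b => bif b then t + 1 else t with hc
  obtain ⟨hNfff, hNftt, hNftf, hNtff, hNttf, hNttt⟩ :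
      formN 1 c false false false = -1 * (t * (t - 1)) ∧
      formN 1 c false true true = -1 * t ^ 2 ∧
      formN 1 c false true false = -1 * (t ^ 2 - t + 1) ∧
      formN 1 c true false false = -1 * ((t + 1) * (t - 1)) ∧
      formN 1 c true true false = -1 * t ^ 2 ∧
      formN 1 c true true true = -1 * (t * (t + 1)) := by
    simp only [formN, hc, cond]
    and_intros <;> ring
  obtain ⟨hUfft, hUfff, hUftf, hUftt, hUtff, hUtft, hUttt⟩ :
      formU 1 c false false false true = -1 * (t ^ 3 - t ^ 2 + 1) ∧
      formU 1 c false false true false = -1 * (t * (t - 1) ^ 2) ∧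
      formU 1 c false true false false = -1 * (t * (t ^ 2 - t - 1)) ∧
      formU 1 c false true true true = -1 * (t * ((t + 1) * (t - 1))) ∧
      formU 1 c true false false false = -1 * (t ^ 2 * (t - 1)) ∧
      (∀ r, formU 1 c true false r true = -1 * ((t + 1) * (t ^ 2 - t + 1))) ∧
      formU 1 c true true false true = -1 * (t ^ 2 * (t + 1)) := by
    simp only [formU, formN, formD, hc, cond]
    and_intros <;> intros <;> ring
  obtain ⟨hVftf, hVtft⟩ :
      formV 1 c false true false true = -1 * (t * ((t + 1) * (t - 1))) ∧
      formV 1 c true false true false = -1 * (t ^ 2 * (t + 1)) := by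
    simp only [formV, formN, formD, hc, cond]
    and_intros <;> ring
  refine ⟨one_ne_zero, ?_, ?_, fun i j r s => ?_⟩
  · simp [hc, ht, ht_add, -quadraticChar_apply]
  · have hsub : (1 - c false) * (1 - c true) = t * (t - 1) := by simp only [hc, cond]; ring
    simp [hsub, ht, ht_sub, -quadraticChar_apply]
  · cases i <;> cases j <;> cases r <;> cases s <;>
      simp [hD, boolSign, hNfff, hNftt, hNftf, hNtff, hNttf, hNttt, hUfft, hUfff, hUftf, hUftt,
        hUtff, hUtft, hUttt, hVftf, hVtft, hneg, ht, ht_add, ht_sub, h₁, h₂, h₄,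
        -quadraticChar_apply, -neg_mul, -mul_neg]

theorem quadraticChar_formD_one_sub {t : F} (hneg : quadraticChar F (-1) = 1)
    (ht : quadraticChar F t = -1) (ht_sub : quadraticChar F (1 - t) = -1)
    (h₂ : quadraticChar F (t ^ 2 + t - 1) = -1) (h₃ : quadraticChar F (t ^ 2 - 3 * t + 1) = -1)
    (j r s : Bool) :
    quadraticChar F (formD 1 (fun b => bif b then 1 - t else t) j r s) =
      boolSign (j == r && j != s) := by
  set c : Bool → F := fun b => bif b then 1 - t else t with hc
  obtain ⟨hfff, hfft, hftf, hftt, htff, htft, httf, httt⟩ :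
      formD 1 c false false false = -1 * (t * (1 - t)) ∧
      formD 1 c false false true = t ^ 2 + t - 1 ∧
      formD 1 c false true false = -1 * t ^ 2 ∧
      formD 1 c false true true = -1 * (1 - t) ^ 2 ∧
      formD 1 c true false false = -1 * t ^ 2 ∧
      formD 1 c true false true = -1 * (1 - t) ^ 2 ∧
      formD 1 c true true false = t ^ 2 - 3 * t + 1 ∧
      formD 1 c true true true = -1 * (t * (1 - t)) := by
    simp only [formD, hc, cond]
    and_intros <;> ring
  cases j <;> cases r <;> cases s <;>
    simp [boolSign, hfff, hfft, hftf, hftt, htff, htft, httf, httt, hneg, ht, ht_sub, h₂, h₃,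
      -quadraticChar_apply, -neg_mul, -mul_neg]

theorem isNonassocTriple_one_sub {t : F} (hneg : quadraticChar F (-1) = 1)
    (ht : quadraticChar F t = -1) (ht_sub : quadraticChar F (1 - t) = -1)
    (h₁ : quadraticChar F (-t ^ 3 + t ^ 2 - 2 * t + 1) = 1)
    (h₂ : quadraticChar F (t ^ 2 + t - 1) = -1) (h₃ : quadraticChar F (t ^ 2 - 3 * t + 1) = -1) :
    IsNonassocTriple 1 fun b => bif b then 1 - t else t := by
  have hD := quadraticChar_formD_one_sub hneg ht ht_sub h₂ h₃
  set c : Bool → F := fun b => bif b then 1 - t else t with hc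
  obtain ⟨hNfft, hNftf, hNfff, hNftt, hNtff, hNtft, hNttf, hNttt⟩ :
      formN 1 c false false true = (1 - t) ^ 2 ∧
      formN 1 c false true false = -1 * (t ^ 2 - 3 * t + 1) ∧
      formN 1 c false false false = t * (1 - t) ∧
      formN 1 c false true true = t ^ 2 ∧
      formN 1 c true false false = (1 - t) ^ 2 ∧
      formN 1 c true false true = -1 * (t ^ 2 + t - 1) ∧
      formN 1 c true true false = t ^ 2 ∧
      formN 1 c true true true = t * (1 - t) := by
    simp only [formN, hc, cond]
    and_intros <;> ring
  obtain ⟨hUfff, hUfft, hUttt⟩ :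
      formU 1 c false false false false = -1 * (t * (1 - t) ^ 2) ∧
      formU 1 c false false true true = -1 * (-t ^ 3 + t ^ 2 - 2 * t + 1) ∧
      formU 1 c true true true true = -1 * (t ^ 2 * (1 - t)) := by
    simp only [formU, formN, formD, hc, cond]
    and_intros <;> ring
  have hVttf : formV 1 c true true false false = -t ^ 3 + t ^ 2 - 2 * t + 1 := by
    simp only [formV, formN, formD, hc, cond]
    ring
  refine ⟨one_ne_zero, ?_, ?_, fun i j r s => ?_⟩
  · simp [hc, ht, ht_sub, -quadraticChar_apply]
  · simp [hc, ht, ht_sub, -quadraticChar_apply]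
  · cases i <;> cases j <;> cases r <;> cases s <;>
      simp [hD, boolSign, hNfft, hNftf, hNfff, hNftt, hNtff, hNtft, hNttf, hNttt, hUfff, hUfft,
        hUttt, hVttf, hneg, ht, ht_sub, h₁, h₂, h₃, -quadraticChar_apply, -neg_mul, -mul_neg]

end QuadraticFamilies

section Separability

theorem isCoprime_of_mul_add_mul_eq_of_isUnit {R : Type*} [CommSemiring R] {a b x y u : R}
    (hu : IsUnit u) (h : a * x + b * y = u) : IsCoprime x y := by
  obtain ⟨v, hv⟩ := hu.exists_left_inv
  exact ⟨v * a, v * b, by rw [mul_assoc, mul_assoc, ← mul_add, h, hv]⟩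

variable {F : Type*} [Field F]

theorem isUnit_ofNat_polynomial {n : ℕ} [n.AtLeastTwo] (hn : (OfNat.ofNat n : F) ≠ 0) :
    IsUnit (OfNat.ofNat n : F[X]) := by
  have hC := isUnit_C.2 hn.isUnit
  rwa [map_ofNat] at hC

theorem separable_X_pow_seven_sub_X_mul_mul (h2 : (2 : F) ≠ 0) (h3 : (3 : F) ≠ 0)
    (h5 : (5 : F) ≠ 0) (h7 : (7 : F) ≠ 0) (h23 : (23 : F) ≠ 0) :
    Separable ((X ^ 7 - X) * (X ^ 2 - X - 1) * (X ^ 3 - X ^ 2 + 1) : F[X]) := by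
  have unit2 := isUnit_ofNat_polynomial h2
  obtain ⟨dA, dB, dC⟩ : derivative (X ^ 7 - X : F[X]) = 7 * X ^ 6 - 1 ∧
      derivative (X ^ 2 - X - 1 : F[X]) = 2 * X - 1 ∧
      derivative (X ^ 3 - X ^ 2 + 1 : F[X]) = 3 * X ^ 2 - 2 * X := by
    simp only [derivative_add, derivative_sub, derivative_X_pow, derivative_X, derivative_one,
      map_natCast]
    and_intros <;> push_cast <;> ring
  have hA : Separable (X ^ 7 - X : F[X]) :=
    isCoprime_of_mul_add_mul_eq_of_isUnit (unit2.mul (isUnit_ofNat_polynomial h3))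
      (a := -49 * X ^ 5) (b := 7 * X ^ 6 - 6) (by rw [dA]; ring)
  have hB : Separable (X ^ 2 - X - 1 : F[X]) :=
    isCoprime_of_mul_add_mul_eq_of_isUnit (isUnit_ofNat_polynomial h5)
      (a := -4) (b := 2 * X - 1) (by rw [dB]; ring)
  have hC : Separable (X ^ 3 - X ^ 2 + 1 : F[X]) :=
    isCoprime_of_mul_add_mul_eq_of_isUnit (isUnit_ofNat_polynomial h23)
      (a := 6 * X + 23) (b := -2 * X ^ 2 - 7 * X + 3) (by rw [dC]; ring)
  have hAB : IsCoprime (X ^ 7 - X) (X ^ 2 - X - 1 : F[X]) :=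
    isCoprime_of_mul_add_mul_eq_of_isUnit (unit2.mul unit2)
      (a := -3 * X + 5) (b := 3 * X ^ 6 - 2 * X ^ 5 + X ^ 4 - X ^ 3 - X - 4) (by ring)
  have hAC : IsCoprime (X ^ 7 - X) (X ^ 3 - X ^ 2 + 1 : F[X]) :=
    isCoprime_of_mul_add_mul_eq_of_isUnit (isUnit_ofNat_polynomial h7)
      (a := 5 * X ^ 2 - 6 * X + 4)
      (b := -5 * X ^ 6 + X ^ 5 - 3 * X ^ 4 + 2 * X ^ 3 + X ^ 2 + 4 * X + 7) (by ring)
  have hBC : IsCoprime (X ^ 2 - X - 1) (X ^ 3 - X ^ 2 + 1 : F[X]) :=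
    ⟨X ^ 2 - 2 * X + 1, -X + 2, by ring⟩
  exact (hA.mul hB hAB).mul hC (hAC.mul_left hBC)

theorem separable_X_mul_one_sub_X_mul_mul_mul (h2 : (2 : F) ≠ 0) (h5 : (5 : F) ≠ 0)
    (h23 : (23 : F) ≠ 0) :
    Separable (X * (1 - X) * (-X ^ 3 + X ^ 2 - 2 * X + 1) *
      ((X ^ 2 + X - 1) * (X ^ 2 - 3 * X + 1)) : F[X]) := by
  have unit5 := isUnit_ofNat_polynomial h5
  obtain ⟨dA, dB, dC, dD⟩ : derivative (X * (1 - X) : F[X]) = 1 - 2 * X ∧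
      derivative (-X ^ 3 + X ^ 2 - 2 * X + 1 : F[X]) = -3 * X ^ 2 + 2 * X - 2 ∧
      derivative (X ^ 2 + X - 1 : F[X]) = 2 * X + 1 ∧
      derivative (X ^ 2 - 3 * X + 1 : F[X]) = 2 * X - 3 := by
    simp only [derivative_add, derivative_sub, derivative_neg, derivative_mul, derivative_X_pow,
      derivative_X, derivative_one, derivative_ofNat, map_natCast]
    and_intros <;> push_cast <;> ring
  have hA : Separable (X * (1 - X) : F[X]) := ⟨4, 1 - 2 * X, by rw [dA]; ring⟩
  have hB : Separable (-X ^ 3 + X ^ 2 - 2 * X + 1 : F[X]) :=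
    isCoprime_of_mul_add_mul_eq_of_isUnit (isUnit_ofNat_polynomial h23)
      (a := 30 * X + 1) (b := -10 * X ^ 2 + 3 * X - 11) (by rw [dB]; ring)
  have hC : Separable (X ^ 2 + X - 1 : F[X]) :=
    isCoprime_of_mul_add_mul_eq_of_isUnit unit5 (a := -4) (b := 2 * X + 1) (by rw [dC]; ring)
  have hD : Separable (X ^ 2 - 3 * X + 1 : F[X]) :=
    isCoprime_of_mul_add_mul_eq_of_isUnit unit5 (a := -4) (b := 2 * X - 3) (by rw [dD]; ring)
  have hAB : IsCoprime (X * (1 - X)) (-X ^ 3 + X ^ 2 - 2 * X + 1 : F[X]) :=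
    ⟨2 * X ^ 2 - X + 4, -2 * X + 1, by ring⟩
  have hAC : IsCoprime (X * (1 - X)) (X ^ 2 + X - 1 : F[X]) := ⟨2 * X + 3, 2 * X - 1, by ring⟩
  have hAD : IsCoprime (X * (1 - X)) (X ^ 2 - 3 * X + 1 : F[X]) := ⟨-2 * X + 5, -2 * X + 1, by ring⟩
  have hBC : IsCoprime (-X ^ 3 + X ^ 2 - 2 * X + 1) (X ^ 2 + X - 1 : F[X]) :=
    ⟨-5 * X - 8, -5 * X ^ 2 + 2 * X - 9, by ring⟩
  have hBD : IsCoprime (-X ^ 3 + X ^ 2 - 2 * X + 1) (X ^ 2 - 3 * X + 1 : F[X]) :=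
    isCoprime_of_mul_add_mul_eq_of_isUnit unit5
      (a := -7 * X + 18) (b := -7 * X ^ 2 + 4 * X - 13) (by ring)
  have hCD : IsCoprime (X ^ 2 + X - 1) (X ^ 2 - 3 * X + 1 : F[X]) :=
    isCoprime_of_mul_add_mul_eq_of_isUnit (isUnit_ofNat_polynomial h2)
      (a := 2 * X - 5) (b := -2 * X - 3) (by ring)
  exact (hA.mul hB hAB).mul (hC.mul hD hCD) ((hAC.mul_right hAD).mul_left (hBC.mul_right hBD))

end Separability

section LargePrimes

variable {p : ℕ} [Fact p.Prime]

theorem zmod_ofNat_ne_zero {n : ℕ} [n.AtLeastTwo] (hn : n < p) :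
    (OfNat.ofNat n : ZMod p) ≠ 0 := by
  rw [← Nat.cast_ofNat, Ne, ZMod.natCast_eq_zero_iff]
  exact Nat.not_dvd_of_pos_of_lt (Nat.pos_of_ne_zero (NeZero.ne n)) hn

theorem exists_isNonassocTriple_add_one (h4 : p % 4 = 3) (hp : 2789000 ≤ p) :
    ∃ t : ZMod p, IsNonassocTriple 1 fun b => bif b then t + 1 else t := by
  have hp2 : p ≠ 2 := by omega
  let f : Fin 7 → (ZMod p)[X] := ![X, X + 1, X - 1, X ^ 2 - X - 1, X ^ 3 - X ^ 2 + 1,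
    X ^ 2 + X + 1, X ^ 2 - X + 1]
  have hdeg : ∀ i, (f i).natDegree = ![1, 1, 1, 2, 3, 2, 2] i := by
    intro i
    fin_cases i <;> dsimp [f] <;> compute_degree!
  have hsum : ∑ i, (f i).natDegree = 12 := by simp only [hdeg]; rfl
  have hsq : Squarefree (∏ i, f i) := by
    have hprod : ∏ i, f i = (X ^ 7 - X) * (X ^ 2 - X - 1) * (X ^ 3 - X ^ 2 + 1) := by
      simp only [f, Fin.prod_univ_seven, Matrix.cons_val]
      ring
    rw [hprod]
    refine (separable_X_pow_seven_sub_X_mul_mul ?_ ?_ ?_ ?_ ?_).squarefree <;>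
      exact zmod_ofNat_ne_zero (lt_of_lt_of_le (by norm_num) hp)
  have hsqrt : 1670 ≤ p.sqrt := Nat.le_sqrt.2 (by omega)
  obtain ⟨t, ht⟩ := exists_forall_quadraticChar_eval_eq (f := f) (ε := ![-1, -1, -1, -1, -1, 1, -1])
    hp2 (fun i => by rw [hdeg]; revert i; decide) hsq (by decide)
    (by rw [hsum, Fintype.card_fin]; nlinarith [p.sqrt_le])
  have hneg : quadraticChar (ZMod p) (-1) = -1 := by
    rw [quadraticChar_neg_one (by rwa [ZMod.ringChar_zmod_n]), ZMod.card,
      ZMod.χ₄_nat_three_mod_four h4]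
  refine ⟨t, isNonassocTriple_add_one hneg ?_ ?_ ?_ ?_ ?_ ?_ ?_⟩
  · simpa [f, -quadraticChar_apply] using ht 0
  · simpa [f, -quadraticChar_apply] using ht 1
  · simpa [f, -quadraticChar_apply] using ht 2
  · simpa [f, -quadraticChar_apply] using ht 3
  · simpa [f, -quadraticChar_apply] using ht 4
  · simpa [f, -quadraticChar_apply] using ht 5
  · simpa [f, -quadraticChar_apply] using ht 6

theorem exists_isNonassocTriple_one_sub (h4 : p % 4 = 1) (hp : 106000 ≤ p) :
    ∃ t : ZMod p, IsNonassocTriple 1 fun b => bif b then 1 - t else t := by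
  have hp2 : p ≠ 2 := by omega
  let f : Fin 5 → (ZMod p)[X] :=
    ![X, 1 - X, -X ^ 3 + X ^ 2 - 2 * X + 1, X ^ 2 + X - 1, X ^ 2 - 3 * X + 1]
  have hdeg : ∀ i, (f i).natDegree = ![1, 1, 3, 2, 2] i := by
    intro i
    fin_cases i <;> dsimp [f] <;> compute_degree!
  have hsum : ∑ i, (f i).natDegree = 9 := by simp only [hdeg]; rfl
  have hsq : Squarefree (∏ i, f i) := by
    have hprod : ∏ i, f i = X * (1 - X) * (-X ^ 3 + X ^ 2 - 2 * X + 1) *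
        ((X ^ 2 + X - 1) * (X ^ 2 - 3 * X + 1)) := by
      simp only [f, Fin.prod_univ_five, Matrix.cons_val]
      ring
    rw [hprod]
    refine (separable_X_mul_one_sub_X_mul_mul_mul ?_ ?_ ?_).squarefree <;>
      exact zmod_ofNat_ne_zero (lt_of_lt_of_le (by norm_num) hp)
  have hsqrt : 325 ≤ p.sqrt := Nat.le_sqrt.2 (by omega)
  obtain ⟨t, ht⟩ := exists_forall_quadraticChar_eval_eq (f := f) (ε := ![-1, -1, 1, -1, -1])
    hp2 (fun i => by rw [hdeg]; revert i; decide) hsq (by decide)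
    (by rw [hsum, Fintype.card_fin]; nlinarith [p.sqrt_le])
  have hneg : quadraticChar (ZMod p) (-1) = 1 := by
    rw [quadraticChar_neg_one (by rwa [ZMod.ringChar_zmod_n]), ZMod.card,
      ZMod.χ₄_nat_one_mod_four h4]
  refine ⟨t, isNonassocTriple_one_sub hneg ?_ ?_ ?_ ?_ ?_⟩
  · simpa [f, -quadraticChar_apply] using ht 0
  · simpa [f, -quadraticChar_apply] using ht 1
  · simpa [f, -quadraticChar_apply] using ht 2
  · simpa [f, -quadraticChar_apply] using ht 3
  · simpa [f, -quadraticChar_apply] using ht 4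

end LargePrimes

section PrimePowers

theorem hasMaxNonassoc_of_large_prime {p : ℕ} (hp : p.Prime) (hp2 : p ≠ 2)
    (h1 : p % 4 = 1 → 106000 ≤ p) (h3 : p % 4 = 3 → 2789000 ≤ p) : HasMaxNonassoc p := by
  have := Fact.mk hp
  rw [← ZMod.card p]
  rcases Nat.odd_mod_four_iff.1 (hp.mod_two_eq_one_iff_ne_two.2 hp2) with h | h
  · obtain ⟨t, ht⟩ := exists_isNonassocTriple_one_sub h (h1 h)
    exact ht.hasMaxNonassoc
  · obtain ⟨t, ht⟩ := exists_isNonassocTriple_add_one h (h3 h)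
    exact ht.hasMaxNonassoc

theorem hasMaxNonassoc_of_prime {p : ℕ} (hp : p.Prime) (h13 : 13 ≤ p) : HasMaxNonassoc p := by
  by_cases h71 : p ≤ 71
  · exact hasMaxNonassoc_of_prime_of_le hp h13 h71
  by_cases hbound : (p % 4 = 1 → p < 106000) ∧ (p % 4 = 3 → p < 2789000)
  · exact hasMaxNonassoc_of_prime_of_lt hp (not_le.1 h71) hbound.1 hbound.2
  · exact hasMaxNonassoc_of_large_prime hp (by omega) (by omega) (by omega)

theorem pow_mem_of_sq_mem_of_cube_mem {M : Type*} [Monoid M] {S : Submonoid M} {x : M}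
    (h2 : x ^ 2 ∈ S) (h3 : x ^ 3 ∈ S) {k : ℕ} (hk : k ≠ 1) : x ^ k ∈ S := by
  obtain ⟨a, b, rfl⟩ : ∃ a b, k = 2 * a + 3 * b := ⟨(k - 3 * (k % 2)) / 2, k % 2, by omega⟩
  rw [pow_add, pow_mul, pow_mul]
  exact mul_mem (pow_mem h2 a) (pow_mem h3 b)

theorem hasMaxNonassoc_two_pow {k : ℕ} (hk : Even k) (hk2 : k ≠ 2) (hk4 : k ≠ 4) :
    HasMaxNonassoc (2 ^ k) := by
  have hmem {j : ℕ} (hj : j ∈ [6, 8, 10]) : 2 ^ j ∈ maxNonassocOrders :=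
    hasMaxNonassoc_two_pow_of_mem hj
  obtain ⟨a, b, c, rfl⟩ : ∃ a b c, k = 6 * a + 8 * b + 10 * c := by
    obtain ⟨m, rfl⟩ := hk
    rcases (by omega : m % 3 = 0 ∨ m % 3 = 1 ∨ m % 3 = 2) with h | h | h
    · exact ⟨m / 3, 0, 0, by omega⟩
    · exact ⟨(m - 4) / 3, 1, 0, by omega⟩
    · exact ⟨(m - 5) / 3, 0, 1, by omega⟩
  rw [pow_add, pow_add, pow_mul, pow_mul, pow_mul]
  exact mul_mem (mul_mem (pow_mem (hmem (by decide)) a) (pow_mem (hmem (by decide)) b))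
    (pow_mem (hmem (by decide)) c)

theorem hasMaxNonassoc_prime_pow {p k : ℕ} (hp : p.Prime) (hk : p ∈ [3, 5, 7, 11] → k ≠ 1)
    (hk2 : p = 2 → Even k ∧ k ≠ 2 ∧ k ≠ 4) : HasMaxNonassoc (p ^ k) := by
  by_cases h13 : 13 ≤ p
  · exact pow_mem (S := maxNonassocOrders) (hasMaxNonassoc_of_prime hp h13) k
  have hsmall : p = 2 ∨ p ∈ [3, 5, 7, 11] := by
    interval_cases p <;> first | decide | norm_num at hp
  rcases hsmall with rfl | hmem
  · exact hasMaxNonassoc_two_pow (hk2 rfl).1 (hk2 rfl).2.1 (hk2 rfl).2.2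
  · have hcodes : ∀ q ∈ [3, 5, 7, 11], ∀ j ∈ [2, 3],
        (q, j) ∈ quadraticCodes.map fun t => (t.1.p, t.1.k) := by decide
    exact pow_mem_of_sq_mem_of_cube_mem (S := maxNonassocOrders)
      (hasMaxNonassoc_pow_of_mem_quadraticCodes hp two_ne_zero (hcodes p hmem 2 (by decide)))
      (hasMaxNonassoc_pow_of_mem_quadraticCodes hp three_ne_zero (hcodes p hmem 3 (by decide)))
      (hk hmem)

end PrimePowers

end MaxNonassoc

/-- Theorem 4.1 (Main result): if `ν_p(n) ≠ 1` for `p ∈ {3,5,7,11}` and `ν_2(n)`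
is even and different from `2` and `4`, then a maximally nonassociative
quasigroup of order `n` exists. -/
theorem exists_maxNonassoc_main (n : ℕ) (hn : 0 < n)
    (h3 : n.factorization 3 ≠ 1) (h5 : n.factorization 5 ≠ 1)
    (h7 : n.factorization 7 ≠ 1) (h11 : n.factorization 11 ≠ 1)
    (h2even : Even (n.factorization 2))
    (h2a : n.factorization 2 ≠ 2) (h2b : n.factorization 2 ≠ 4) :
    ∃ (Q : Type) (m : Q → Q → Q),
      Nat.card Q = n ∧
      (∀ a b : Q, (∃! x, m a x = b) ∧ (∃! y, m y a = b)) ∧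
      Nat.card {t : Q × Q × Q //
        m (m t.1 t.2.1) t.2.2 = m t.1 (m t.2.1 t.2.2)} = n := by
  change n ∈ MaxNonassoc.maxNonassocOrders
  rw [← Nat.prod_factorization_pow_eq_self hn.ne']
  refine prod_mem fun p hp => MaxNonassoc.hasMaxNonassoc_prime_pow ?_ ?_ ?_
  · exact Nat.prime_of_mem_primeFactors (Nat.support_factorization n ▸ hp)
  · intro hp_small
    rcases (by simpa using hp_small : p = 3 ∨ p = 5 ∨ p = 7 ∨ p = 11) with rfl | rfl | rfl | rfl
    exacts [h3, h5, h7, h11]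
  · rintro rfl
    exact ⟨h2even, h2a, h2b⟩
end

section
/- Let q be an odd prime power and let a ∈ F_q satisfy a ∉ {−1, 0, 1} and both a and a+1 squares in F_q (so that L := L_{a,a²} is a Latin square). Then there is no associative triple of the form (t, t, v) with t ≠ v: for all t, v ∈ F_q with t ≠ v, L(L(t,t), v) ≠ L(t, L(t,v)). -/
open scoped Classical

/-!
Since `L t t = t`, associativity of `(t, t, v)` says that `L t v` is a fixed point of `L t`. But
`L t` fixes only `t`, because neither coefficient is `1`, and it sends only `t` to `t`, because
neither coefficient is `0`.
-/

section DomainLemmas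

variable {R : Type*} [Ring R] [NoZeroDivisors R] {c x y : R}

theorem add_mul_sub_eq_left_iff : x + c * (y - x) = x ↔ c = 0 ∨ y = x := by
  rw [add_eq_left, mul_eq_zero, sub_eq_zero]

theorem add_mul_sub_eq_right_iff : x + c * (y - x) = y ↔ c = 1 ∨ y = x := by
  have hsub : x + c * (y - x) - y = (c - 1) * (y - x) := by noncomm_ring
  rw [← sub_eq_zero, hsub, mul_eq_zero, sub_eq_zero, sub_eq_zero]

end DomainLemmas

/-- The operation `L_{a,b}` of the quadratic Latin squares, over an arbitrary ring. The coefficient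
is `a` when `y - x` is a square (`0` included) and `b` otherwise; nothing makes it a Latin square
for arbitrary `a` and `b`. -/
def quadraticOp {R : Type*} [Ring R] [DecidablePred (IsSquare : R → Prop)] (a b x y : R) : R :=
  if IsSquare (y - x) then x + a * (y - x) else x + b * (y - x)

namespace quadraticOp

variable {R : Type*} [Ring R] [DecidablePred (IsSquare : R → Prop)] {a b : R}

theorem apply_self (a b x : R) : quadraticOp a b x x = x := by
  simp [quadraticOp]

variable [NoZeroDivisors R]

theorem eq_left_iff (ha : a ≠ 0) (hb : b ≠ 0) {x y : R} : quadraticOp a b x y = x ↔ y = x := by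
  unfold quadraticOp
  split_ifs <;> simp only [add_mul_sub_eq_left_iff, ha, hb, false_or]

theorem eq_right_iff (ha : a ≠ 1) (hb : b ≠ 1) {x y : R} : quadraticOp a b x y = y ↔ y = x := by
  unfold quadraticOp
  split_ifs <;> simp only [add_mul_sub_eq_right_iff, ha, hb, false_or]

end quadraticOp

theorem Laa2_no_assoc_ttv_general {R : Type*} [Ring R] [NoZeroDivisors R]
    [DecidablePred (IsSquare : R → Prop)] {a b : R}
    (ha0 : a ≠ 0) (ha1 : a ≠ 1) (hb0 : b ≠ 0) (hb1 : b ≠ 1) {t v : R} (htv : t ≠ v) :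
    quadraticOp a b (quadraticOp a b t t) v ≠ quadraticOp a b t (quadraticOp a b t v) := by
  rw [quadraticOp.apply_self]
  intro hassoc
  have hfixed : quadraticOp a b t v = t := (quadraticOp.eq_right_iff ha1 hb1).mp hassoc.symm
  exact htv ((quadraticOp.eq_left_iff ha0 hb0).mp hfixed).symm

/-- No associative triple of `L_{a,a²}` has the form `(t,t,v)` with `t ≠ v`. -/
theorem Laa2_no_assoc_ttv (F : Type*) [Field F] [Fintype F]
    (q : ℕ) (hq : Fintype.card F = q) (hodd : Odd q)
    (a : F) (ha1 : a ≠ -1) (ha2 : a ≠ 0) (ha3 : a ≠ 1)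
    (hs1 : IsSquare a) (hs2 : IsSquare (a + 1))
    (L : F → F → F)
    (hL : ∀ x y : F,
      L x y = if IsSquare (y - x) then x + a * (y - x) else x + a ^ 2 * (y - x)) :
    ∀ t v : F, t ≠ v → L (L t t) v ≠ L t (L t v) := by
  obtain rfl : L = quadraticOp a (a ^ 2) := funext₂ hL
  exact fun _ _ => Laa2_no_assoc_ttv_general ha2 ha3 (pow_ne_zero 2 ha2)
    (sq_ne_one_iff.mpr ⟨ha3, ha1⟩)
end

section
/- Let q ≡ 3 (mod 4) be a prime power and let a ∈ F_q be such that a ≠ −1, 0, 1, the elements a, a+1, a−1, a²+1, a³+a²−1 are squares in F_q, and the elements a²−a+1, a²+a+1, a²+a−1 are non-squares in F_q. Write L := L_{a,a²}. Then no triple of the form (0, 1, z) is associative: for every z ∈ F_q, L(L(0,1), z) ≠ L(0, L(1,z)). -/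
open scoped Classical

/-! Put `L := L_{a,a²}`. Since `L 0 1 = a`, associativity of `(0, 1, z)` is one of eight linear
equations in `z`, according to whether `z - a`, `z - 1` and `L 1 z` are squares. One of them has no
solution. Solving each of the others either exhibits one of these three elements as minus a nonzero
square where its branch requires a square, or shows that `z - a` is a square where its branch
requires a non-square. The elements `a² ± a + 1` enter through their negatives, which are squares
because negation exchanges nonzero squares and non-squares when `q ≡ 3 (mod 4)`. -/

section SquareOp

variable {R : Type*} [Ring R]

/-- The operation `L_{a,b}` on a ring: from `x`, move by `a` or `b` times the difference `y - x`,
according to whether that difference is a square, where `0` counts as a square. -/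
noncomputable def squareOp (a b x y : R) : R :=
  if IsSquare (y - x) then x + a * (y - x) else x + b * (y - x)

theorem squareOp_of_isSquare {x y : R} (a b : R) (h : IsSquare (y - x)) :
    squareOp a b x y = x + a * (y - x) :=
  if_pos h

theorem squareOp_of_not_isSquare {x y : R} (a b : R) (h : ¬IsSquare (y - x)) :
    squareOp a b x y = x + b * (y - x) :=
  if_neg h

theorem exists_squareOp_eq (a b x y : R) :
    ∃ c, (c = a ∨ c = b) ∧ squareOp a b x y = x + c * (y - x) := by
  by_cases h : IsSquare (y - x)
  · exact ⟨a, .inl rfl, squareOp_of_isSquare a b h⟩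
  · exact ⟨b, .inr rfl, squareOp_of_not_isSquare a b h⟩

theorem squareOp_zero_one (a b : R) : squareOp a b 0 1 = a := by
  simp [squareOp]

end SquareOp

section NegOneNotSquare

variable {F : Type*} [Field F]

theorem isSquare_neg_of_not_isSquare [Finite F] (hneg : ¬IsSquare (-1 : F)) {x : F}
    (hx : ¬IsSquare x) : IsSquare (-x) := by
  have := Fintype.ofFinite F
  have hx0 : -x ≠ 0 := neg_ne_zero.2 fun h => hx (h ▸ IsSquare.zero)
  rw [← quadraticChar_one_iff_isSquare hx0, neg_eq_neg_one_mul, map_mul,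
    quadraticChar_neg_one_iff_not_isSquare.2 hneg, quadraticChar_neg_one_iff_not_isSquare.2 hx]
  norm_num

theorem add_one_ne_zero_of_isSquare {R : Type*} [Ring R] (hneg : ¬IsSquare (-1 : R)) {x : R}
    (hx : IsSquare x) : x + 1 ≠ 0 :=
  fun h => hneg (eq_neg_of_add_eq_zero_left h ▸ hx)

theorem not_isSquare_of_mul_eq_neg (hneg : ¬IsSquare (-1 : F)) {u s t : F} (hs : IsSquare s)
    (ht : IsSquare t) (ht0 : t ≠ 0) (h : u * s = -t) : ¬IsSquare u := fun hu =>
  hneg <| by simpa [h, neg_div, ht0] using (hu.mul hs).div ht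

end NegOneNotSquare

section LinearEquations

variable {F : Type*} [Field F] {a z : F}

theorem not_isSquare_sub_of_assoc_eq (hneg : ¬IsSquare (-1 : F)) (ha0 : a ≠ 0) (ha1 : a ≠ 1)
    (ha : IsSquare a) (ha_add : IsSquare (a + 1)) (ha_sq_add : IsSquare (a ^ 2 + 1))
    (ha_neg_sub : IsSquare (-(a ^ 2 - a + 1))) (ha_neg_add : IsSquare (-(a ^ 2 + a + 1)))
    {c d : F} (hc : c = a ∨ c = a ^ 2) (hd : d = a ∨ d = a ^ 2)
    (h : a + a * (z - a) = d * (1 + c * (z - 1))) : ¬IsSquare (z - a) := by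
  have hcoeff : a * (a - 1) ≠ 0 := mul_ne_zero ha0 (sub_ne_zero.2 ha1)
  rcases hc with rfl | rfl <;> rcases hd with rfl | rfl
  · have hz : (z - d) * 1 = -d := mul_left_cancel₀ hcoeff (by linear_combination -h)
    exact not_isSquare_of_mul_eq_neg hneg .one ha ha0 hz
  · have hz : (z - c) * (c + 1) = -(c ^ 2 + 1) :=
      mul_left_cancel₀ hcoeff (by linear_combination -h)
    exact not_isSquare_of_mul_eq_neg hneg ha_add ha_sq_add
      (add_one_ne_zero_of_isSquare hneg (.sq c)) hz
  · have hz : (z - d) * (d + 1) = -d ^ 2 := mul_left_cancel₀ hcoeff (by linear_combination -h)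
    exact not_isSquare_of_mul_eq_neg hneg ha_add (.sq d) (pow_ne_zero 2 ha0) hz
  · have hz : (z - a) * -(a ^ 2 + a + 1) = -((a + 1) * -(a ^ 2 - a + 1)) :=
      mul_left_cancel₀ hcoeff (by linear_combination h)
    have hcube : (a + 1) * -(a ^ 2 - a + 1) ≠ 0 := fun h0 =>
      add_one_ne_zero_of_isSquare hneg (ha.pow 3) (by linear_combination -h0)
    exact not_isSquare_of_mul_eq_neg hneg ha_neg_add (ha_add.mul ha_neg_sub) hcube hz

theorem not_isSquare_sub_one_of_assoc_eq (hneg : ¬IsSquare (-1 : F)) (ha0 : a ≠ 0) (ha1 : a ≠ 1)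
    (ha : IsSquare a) (ha_add : IsSquare (a + 1)) {d : F} (hd : d = a ∨ d = a ^ 2)
    (h : a + a ^ 2 * (z - a) = d * (1 + a * (z - 1))) : ¬IsSquare (z - 1) := by
  have hcoeff : a * (a - 1) ≠ 0 := mul_ne_zero ha0 (sub_ne_zero.2 ha1)
  rcases hd with rfl | rfl
  · exact absurd (by linear_combination -h) (mul_ne_zero ha0 hcoeff)
  · have hz : (z - 1) * a = -(a + 1) := mul_left_cancel₀ hcoeff (by linear_combination -h)
    exact not_isSquare_of_mul_eq_neg hneg ha ha_add (add_one_ne_zero_of_isSquare hneg ha) hz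

theorem not_isSquare_one_add_of_assoc_eq (hneg : ¬IsSquare (-1 : F)) (ha0 : a ≠ 0) (ha1 : a ≠ 1)
    (ha : IsSquare a) (ha_add : IsSquare (a + 1)) (ha_sub : IsSquare (a - 1))
    (h : a + a ^ 2 * (z - a) = a * (1 + a ^ 2 * (z - 1))) :
    ¬IsSquare (1 + a ^ 2 * (z - 1)) := by
  have hsub : a - 1 ≠ 0 := sub_ne_zero.2 ha1
  have hz : z = 0 :=
    mul_left_cancel₀ (mul_ne_zero (pow_ne_zero 2 ha0) hsub) (by linear_combination -h)
  have hprod : (1 + a ^ 2 * (z - 1)) * 1 = -((a - 1) * (a + 1)) := by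
    rw [hz]
    ring
  exact not_isSquare_of_mul_eq_neg hneg .one (ha_sub.mul ha_add)
    (mul_ne_zero hsub (add_one_ne_zero_of_isSquare hneg ha)) hprod

theorem isSquare_sub_of_assoc_eq (ha0 : a ≠ 0) (ha1 : a ≠ 1) (ha_add0 : a + 1 ≠ 0)
    (ha : IsSquare a) (ha_neg_sub : IsSquare (-(a ^ 2 - a + 1)))
    (h : a + a ^ 2 * (z - a) = a ^ 2 * (1 + a ^ 2 * (z - 1))) : IsSquare (z - a) := by
  have hcoeff : a * (a - 1) * (a + 1) ≠ 0 :=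
    mul_ne_zero (mul_ne_zero ha0 (sub_ne_zero.2 ha1)) ha_add0
  have hz : (z - a) * a = -(a ^ 2 - a + 1) := mul_left_cancel₀ hcoeff (by linear_combination -h)
  rw [eq_div_of_mul_eq ha0 hz]
  exact ha_neg_sub.div ha

end LinearEquations

theorem Laa2_no_assoc_01z_q3mod4_general {F : Type*} [Field F] (hneg : ¬IsSquare (-1 : F))
    {a : F} (ha : IsSquare a) (ha_add : IsSquare (a + 1)) (ha_sub : IsSquare (a - 1))
    (ha_sq_add : IsSquare (a ^ 2 + 1)) (ha_neg_sub : IsSquare (-(a ^ 2 - a + 1)))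
    (ha_neg_add : IsSquare (-(a ^ 2 + a + 1))) (z : F) :
    squareOp a (a ^ 2) (squareOp a (a ^ 2) 0 1) z ≠
      squareOp a (a ^ 2) 0 (squareOp a (a ^ 2) 1 z) := by
  intro h
  have ha0 : a ≠ 0 := by rintro rfl; exact hneg (by simpa using ha_sub)
  have ha1 : a ≠ 1 := by rintro rfl; exact hneg (by simpa using ha_neg_sub)
  rw [squareOp_zero_one] at h
  obtain ⟨d, hd, houter⟩ := exists_squareOp_eq a (a ^ 2) 0 (squareOp a (a ^ 2) 1 z)
  by_cases hza : IsSquare (z - a)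
  · obtain ⟨c, hc, hinner⟩ := exists_squareOp_eq a (a ^ 2) 1 z
    rw [houter, squareOp_of_isSquare _ _ hza, hinner, sub_zero, zero_add] at h
    exact not_isSquare_sub_of_assoc_eq hneg ha0 ha1 ha ha_add ha_sq_add ha_neg_sub ha_neg_add
      hc hd h hza
  rw [squareOp_of_not_isSquare _ _ hza] at h
  by_cases hz1 : IsSquare (z - 1)
  · rw [houter, squareOp_of_isSquare _ _ hz1, sub_zero, zero_add] at h
    exact not_isSquare_sub_one_of_assoc_eq hneg ha0 ha1 ha ha_add hd h hz1
  rw [squareOp_of_not_isSquare _ _ hz1] at h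
  by_cases hL : IsSquare (1 + a ^ 2 * (z - 1))
  · rw [squareOp_of_isSquare _ _ (by rwa [sub_zero]), sub_zero, zero_add] at h
    exact not_isSquare_one_add_of_assoc_eq hneg ha0 ha1 ha ha_add ha_sub h hL
  · rw [squareOp_of_not_isSquare _ _ (by rwa [sub_zero]), sub_zero, zero_add] at h
    exact hza (isSquare_sub_of_assoc_eq ha0 ha1 (add_one_ne_zero_of_isSquare hneg ha) ha
      ha_neg_sub h)

/-- Case `q ≡ 3 (mod 4)`: no triple `(0, 1, z)` is associative for `L_{a,a²}`. -/
theorem Laa2_no_assoc_01z_q3mod4 (F : Type*) [Field F] [Fintype F]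
    (q : ℕ) (hq : Fintype.card F = q) (h4 : q % 4 = 3)
    (a : F) (ha1 : a ≠ -1) (ha2 : a ≠ 0) (ha3 : a ≠ 1)
    (hs1 : IsSquare a) (hs2 : IsSquare (a + 1)) (hs3 : IsSquare (a - 1))
    (hs4 : IsSquare (a ^ 2 + 1)) (hs5 : IsSquare (a ^ 3 + a ^ 2 - 1))
    (hn1 : ¬ IsSquare (a ^ 2 - a + 1)) (hn2 : ¬ IsSquare (a ^ 2 + a + 1))
    (hn3 : ¬ IsSquare (a ^ 2 + a - 1))
    (L : F → F → F)
    (hL : ∀ x y : F,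
      L x y = if IsSquare (y - x) then x + a * (y - x) else x + a ^ 2 * (y - x)) :
    ∀ z : F, L (L 0 1) z ≠ L 0 (L 1 z) := by
  have hneg : ¬IsSquare (-1 : F) := by
    rw [FiniteField.isSquare_neg_one_iff, hq]
    exact not_not.2 h4
  obtain rfl : L = squareOp a (a ^ 2) := by
    funext x y
    rw [hL, squareOp]
    -- The two sides differ only in their `Decidable` instances.
    congr
  exact Laa2_no_assoc_01z_q3mod4_general hneg hs1 hs2 hs3 hs4
    (isSquare_neg_of_not_isSquare hneg hn1) (isSquare_neg_of_not_isSquare hneg hn2)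
end
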